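/- arXiv:1012.0675 — 6 statements merged into one kernel-verified Lean document; each statement's English description precedes it below -/
import Mathlib

section
/- Let n ≥ 1 and let ψ : ℕ → [0,∞) be any non-negative function. Then the n-dimensional Lebesgue measure of the multiplicative approximation set S^×_n(ψ) is either 0 or 1. -/
open MeasureTheory Filter

/-- The distance from a real number `y` to the nearest integer:
`‖y‖ = min {|y - p| : p ∈ ℤ}`. -/
noncomputable def distNearestInt (y : ℝ) : ℝ := ⨅ p : ℤ, |y - (p : ℝ)|

/-- The multiplicative approximation set
`S^×_n(ψ) = {x ∈ [0,1]^n : ∏ᵢ ‖q xᵢ‖ < ψ(q) for infinitely many q ∈ ℕ}`. -/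
def Smul (n : ℕ) (ψ : ℕ → ℝ) : Set (Fin n → ℝ) :=
  {x | (∀ i, x i ∈ Set.Icc (0 : ℝ) 1) ∧
    {q : ℕ | 0 < q ∧ ∏ i, distNearestInt (q * x i) < ψ q}.Infinite}

lemma prod_zero_one {α β : Type*} [MeasurableSpace α] [MeasurableSpace β]
    (μ : Measure α) (ν : Measure β) [SFinite μ] [SFinite ν] (A : Set (α × β))
    (hA : MeasurableSet A)
    (h1 : ∀ᵐ x ∂μ, (∀ᵐ y ∂ν, (x, y) ∉ A) ∨ (∀ᵐ y ∂ν, (x, y) ∈ A))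
    (h2 : ∀ᵐ y ∂ν, (∀ᵐ x ∂μ, (x, y) ∉ A) ∨ (∀ᵐ x ∂μ, (x, y) ∈ A)) :
    (∀ᵐ p ∂(μ.prod ν), p ∉ A) ∨ (∀ᵐ p ∂(μ.prod ν), p ∈ A) := by
  by_cases hX : ∀ᵐ x ∂μ, ¬ (∀ᵐ y ∂ν, (x, y) ∈ A)
  · left
    rw [Measure.ae_prod_iff_ae_ae hA.compl]
    filter_upwards [h1, hX] with x hx hx'
    exact hx.resolve_right hx'
  · right
    set Y : Set β := {y | ∀ᵐ x ∂μ, (x, y) ∈ A} with hY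
    have hYm : MeasurableSet Y := by
      have := measurable_measure_prodMk_right (μ := μ) hA.compl
      exact this (measurableSet_singleton 0)
    have key : ∀ᵐ y ∂ν, ∀ᵐ x ∂μ, ((x, y) ∈ A → y ∈ Y) := by
      filter_upwards [h2] with y hy
      rcases hy with hy | hy
      · filter_upwards [hy] with x hx hx'
        exact absurd hx' hx
      · exact Eventually.of_forall fun x _ => hy
    have key2 : ∀ᵐ x ∂μ, ∀ᵐ y ∂ν, ((x, y) ∈ A → y ∈ Y) := by
      rw [Measure.ae_ae_comm]
      · exact key
      · have : {p : α × β | p ∈ A → p.2 ∈ Y} = Aᶜ ∪ Prod.snd ⁻¹' Y := by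
          ext p; simp [imp_iff_not_or]
        exact this ▸ hA.compl.union (measurable_snd hYm)
    have hf : ∃ᶠ x in ae μ, ∀ᵐ y ∂ν, (x, y) ∈ A := hX
    obtain ⟨x, hx, hx2⟩ := (hf.and_eventually key2).exists
    have hYf : ∀ᵐ y ∂ν, ∀ᵐ x ∂μ, (x, y) ∈ A := by
      filter_upwards [hx, hx2] with y a b using b a
    refine (Measure.ae_prod_iff_ae_ae (p := fun z => z ∈ A) hA).2 ?_
    refine (Measure.ae_ae_comm (p := fun x y => (x, y) ∈ A) hA).2 ?_
    exact hYf

instance nullSingleton_circle :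
    NullSingletonClass (volume : Measure UnitAddCircle) := by
  refine ⟨fun x => ?_⟩
  have := AddCircle.volume_closedBall (1 : ℝ) (x := x) 0
  rw [Metric.closedBall_zero] at this
  simpa using this

instance isProbabilityMeasure_circle :
    IsProbabilityMeasure (volume : Measure UnitAddCircle) :=
  ⟨by simp⟩

lemma ae_not_torsion : ∀ᵐ u : UnitAddCircle, ∀ b : ℕ, 0 < b → b • u ≠ 0 := by
  rw [ae_all_iff]
  intro b
  by_cases hb : 0 < b
  · have := (AddCircle.finite_torsion (1 : ℝ) hb).measure_zero (volume : Measure UnitAddCircle)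
    rw [measure_eq_zero_iff_ae_notMem] at this
    filter_upwards [this] with u hu _ using hu
  · exact Eventually.of_forall fun u h => absurd h hb

lemma exists_near (u : UnitAddCircle) (q : ℕ) (hq : 0 < q) :
    ∃ v : UnitAddCircle, q • v = 0 ∧ q * ‖u - v‖ ≤ ‖q • u‖ := by
  obtain ⟨x, rfl⟩ := QuotientAddGroup.mk_surjective u
  have hq' : (0 : ℝ) < q := by exact_mod_cast hq
  set p := round ((q : ℝ) * x) with hp
  refine ⟨((p / q : ℝ) : UnitAddCircle), ?_, ?_⟩
  · have : q • (((p : ℝ) / q : ℝ) : UnitAddCircle) = ((q • ((p : ℝ) / q) : ℝ) : UnitAddCircle) := rfl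
    rw [this, nsmul_eq_mul, mul_div_cancel₀ _ hq'.ne']
    rw [AddCircle.coe_eq_zero_iff]
    exact ⟨p, by simp⟩
  · have h1 : ‖q • ((x : ℝ) : UnitAddCircle)‖ = |q * x - p| := by
      have : q • ((x : ℝ) : UnitAddCircle) = ((q * x : ℝ) : UnitAddCircle) := by
        rw [← nsmul_eq_mul]; rfl
      rw [this, UnitAddCircle.norm_eq]
    change (q : ℝ) * ‖((x : ℝ) : UnitAddCircle) - ((p / q : ℝ) : UnitAddCircle)‖ ≤
      ‖q • ((x : ℝ) : UnitAddCircle)‖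
    rw [h1, ← AddCircle.coe_sub]
    have h2 : ‖((x - p / q : ℝ) : UnitAddCircle)‖ ≤ |x - p / q| := by
      rw [UnitAddCircle.norm_eq]
      simpa using round_le (x - p / q : ℝ) 0
    calc (q : ℝ) * ‖((x - p / q : ℝ) : UnitAddCircle)‖ ≤ q * |x - p / q| := by gcongr
      _ = |q * (x - p / q)| := by rw [abs_mul, abs_of_pos hq']
      _ = |q * x - p| := by congr 1; field_simp

lemma infinite_iff_of_tendsto (ψ : ℕ → ℝ) (hψ : Tendsto (fun q : ℕ => ψ q / q) atTop (nhds 0))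
    (u : UnitAddCircle) (hu : ∀ b : ℕ, 0 < b → b • u ≠ 0) :
    u ∈ addWellApproximable UnitAddCircle
      (fun b => ⨆ k : ℕ, ψ (b * (k + 1)) / ((b * (k + 1) : ℕ) : ℝ)) ↔
    {q : ℕ | 0 < q ∧ ‖q • u‖ < ψ q}.Infinite := by
  have hbdd := hψ.bddAbove_range
  have hbd : ∀ b : ℕ, BddAbove (Set.range fun k : ℕ => ψ (b * (k + 1)) / ((b * (k + 1) : ℕ) : ℝ)) :=
    fun b => hbdd.mono (by rintro _ ⟨k, rfl⟩; exact ⟨b * (k + 1), rfl⟩)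
  rw [mem_add_wellApproximable_iff, ← Nat.cofinite_eq_atTop, cofinite.blimsup_set_eq]
  simp only [Set.mem_ofPred_eq, mem_approx_add_orderOf_iff]
  constructor
  · intro h
    rw [Set.infinite_iff_exists_gt] at h ⊢
    intro N
    obtain ⟨b, ⟨hb, v, hv, hbv⟩, hN⟩ := h N
    rw [mem_ball_iff_norm] at hbv
    obtain ⟨k, hk⟩ := (lt_ciSup_iff (hbd b)).1 hbv
    have hpos : 0 < b * (k + 1) := by positivity
    refine ⟨b * (k + 1), ⟨hpos, ?_⟩, lt_of_lt_of_le hN (Nat.le_mul_of_pos_right _ (by omega))⟩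
    have hv0 : (b * (k + 1)) • v = 0 := by
      rw [← addOrderOf_dvd_iff_nsmul_eq_zero, hv]; exact dvd_mul_right _ _
    have : (b * (k + 1)) • u = (b * (k + 1)) • (u - v) := by rw [nsmul_sub, hv0, sub_zero]
    rw [this]
    refine (norm_nsmul_le).trans_lt ?_
    rwa [lt_div_iff₀ (by exact_mod_cast hpos), mul_comm] at hk
  · intro h
    by_contra hfin
    rw [Set.not_infinite] at hfin
    have hcov : ∀ q ∈ {q : ℕ | 0 < q ∧ ‖q • u‖ < ψ q}, ∃ v : UnitAddCircle,
        q • v = 0 ∧ ‖u - v‖ < ψ q / q := by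
      rintro q ⟨hq, hlt⟩
      obtain ⟨v, hv, hle⟩ := exists_near u q hq
      refine ⟨v, hv, ?_⟩
      rw [lt_div_iff₀ (by exact_mod_cast hq), mul_comm]
      linarith
    choose! v hv0 hv using hcov
    have hmaps : Set.MapsTo (fun q => addOrderOf (v q)) {q : ℕ | 0 < q ∧ ‖q • u‖ < ψ q}
        {x | 0 < x ∧ ∃ b, addOrderOf b = x ∧
          u ∈ Metric.ball b (⨆ k : ℕ, ψ (x * (k + 1)) / ((x * (k + 1) : ℕ) : ℝ))} := by
      intro q hq
      have hd : addOrderOf (v q) ∣ q := addOrderOf_dvd_iff_nsmul_eq_zero.2 (hv0 q hq)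
      obtain ⟨k, hk⟩ := hd
      have hq0 : 0 < q := hq.1
      have hpos : 0 < addOrderOf (v q) := Nat.pos_of_ne_zero fun h0 => by
        rw [h0, zero_mul] at hk; omega
      have hkp : 0 < k := Nat.pos_of_ne_zero fun h0 => by
        rw [h0, mul_zero] at hk; omega
      refine ⟨hpos, v q, rfl, ?_⟩
      rw [mem_ball_iff_norm, lt_ciSup_iff (hbd _)]
      refine ⟨k - 1, ?_⟩
      rw [Nat.sub_add_cancel hkp, ← hk]
      exact hv q hq
    refine h ((hfin.biUnion (t := fun b => {q ∈ {q : ℕ | 0 < q ∧ ‖q • u‖ < ψ q} |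
      addOrderOf (v q) = b}) ?_).subset ?_)
    · intro b hb
      by_contra hinf
      have hfr : ∃ᶠ q in atTop, q ∈ {q ∈ {q : ℕ | 0 < q ∧ ‖q • u‖ < ψ q} |
        addOrderOf (v q) = b} := Nat.frequently_atTop_iff_infinite.2 hinf
      have hbpos : 0 < b := hb.1
      have hb' : (0 : ℝ) < b := by exact_mod_cast hbpos
      have hnp : 0 < ‖b • u‖ := norm_pos_iff.2 (hu b hbpos)
      have hev : ∀ᶠ q : ℕ in atTop, ψ q / q < ‖b • u‖ / b :=
        hψ.eventually_lt_const (by positivity)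
      obtain ⟨q, ⟨hq, hqb⟩, hlt⟩ := (hfr.and_eventually hev).exists
      have hbv : b • v q = 0 := by rw [← hqb]; exact addOrderOf_nsmul_eq_zero _
      have h1 : ‖b • u‖ ≤ b * ‖u - v q‖ := by
        have : b • u = b • (u - v q) := by rw [nsmul_sub, hbv, sub_zero]
        rw [this]
        exact norm_nsmul_le
      have h2 := (hv q hq).trans hlt
      rw [lt_div_iff₀ hb'] at h2
      linarith
    · intro q hq
      exact Set.mem_biUnion (hmaps hq) ⟨hq, rfl⟩

lemma one_dim (ψ : ℕ → ℝ) :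
    (∀ᵐ u : UnitAddCircle, ¬ {q : ℕ | 0 < q ∧ ‖q • u‖ < ψ q}.Infinite) ∨
    (∀ᵐ u : UnitAddCircle, {q : ℕ | 0 < q ∧ ‖q • u‖ < ψ q}.Infinite) := by
  by_cases hbig : ∃ᶠ q in atTop, 1 < ψ q
  · right
    refine Eventually.of_forall fun u => ?_
    rw [← Nat.frequently_atTop_iff_infinite]
    refine (hbig.and_eventually (eventually_gt_atTop 0)).mono fun q hq => ⟨hq.2, ?_⟩
    have := AddCircle.norm_le_half_period (1 : ℝ) (x := q • u) one_ne_zero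
    norm_num at this
    linarith [hq.1]
  · rw [not_frequently] at hbig
    -- cut off at zero from below
    set φ : ℕ → ℝ := fun q => max (ψ q) 0 with hφ
    have hset : ∀ u : UnitAddCircle, {q : ℕ | 0 < q ∧ ‖q • u‖ < ψ q} =
        {q : ℕ | 0 < q ∧ ‖q • u‖ < φ q} := by
      intro u; ext q
      simp only [Set.mem_ofPred_eq, hφ, lt_max_iff, (norm_nonneg (q • u)).not_gt, or_false]
    simp only [hset]
    have ht : Tendsto (fun q : ℕ => φ q / q) atTop (nhds 0) := by
      refine squeeze_zero' (g := fun q : ℕ => 1 / (q : ℝ)) ?_ ?_ tendsto_one_div_atTop_nhds_zero_nat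
      · exact Eventually.of_forall fun q => div_nonneg (le_max_right _ _) (Nat.cast_nonneg _)
      · filter_upwards [hbig] with q hq
        gcongr
        exact max_le (not_lt.1 hq) zero_le_one
    have hδ : Tendsto (fun b : ℕ => ⨆ k : ℕ, φ (b * (k + 1)) / ((b * (k + 1) : ℕ) : ℝ)) atTop
        (nhds 0) := by
      rw [Metric.tendsto_atTop] at ht ⊢
      intro ε hε
      obtain ⟨N, hN⟩ := ht (ε / 2) (by positivity)
      refine ⟨N, fun b hb => ?_⟩
      have h0 : 0 ≤ ⨆ k : ℕ, φ (b * (k + 1)) / ((b * (k + 1) : ℕ) : ℝ) :=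
        Real.iSup_nonneg fun k => div_nonneg (le_max_right _ _) (Nat.cast_nonneg _)
      rw [Real.dist_eq, sub_zero, abs_of_nonneg h0]
      refine lt_of_le_of_lt (ciSup_le fun k => ?_) (half_lt_self hε)
      have := hN (b * (k + 1)) (hb.le.trans (Nat.le_mul_of_pos_right _ (by omega)))
      rw [Real.dist_eq, sub_zero] at this
      exact (le_abs_self _).trans this.le
    rcases AddCircle.addWellApproximable_ae_empty_or_univ (T := 1) _ hδ with h | h
    · left
      filter_upwards [h, ae_not_torsion] with u h1 h2
      rwa [← infinite_iff_of_tendsto φ ht u h2]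
    · right
      filter_upwards [h, ae_not_torsion] with u h1 h2
      rwa [← infinite_iff_of_tendsto φ ht u h2]

def WC (n : ℕ) (ψ : ℕ → ℝ) : Set (Fin n → UnitAddCircle) :=
  {u | {q : ℕ | 0 < q ∧ ∏ i, ‖q • u i‖ < ψ q}.Infinite}

lemma measurableSet_WC (n : ℕ) (ψ : ℕ → ℝ) : MeasurableSet (WC n ψ) := by
  have : WC n ψ = limsup (fun q : ℕ => {u : Fin n → UnitAddCircle | 0 < q ∧ ∏ i, ‖q • u i‖ < ψ q})
      atTop := by
    ext u
    rw [mem_limsup_iff_frequently_mem, Nat.frequently_atTop_iff_infinite]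
    rfl
  rw [this]
  refine MeasurableSet.measurableSet_limsup fun q => ?_
  refine MeasurableSet.inter (MeasurableSet.const _) ?_
  have hc : Continuous fun u : Fin n → UnitAddCircle => ∏ i, ‖q • u i‖ := by fun_prop
  exact (isOpen_lt hc continuous_const).measurableSet

lemma multi_dim (n : ℕ) : ∀ ψ : ℕ → ℝ,
    (∀ᵐ u : Fin n → UnitAddCircle, u ∉ WC n ψ) ∨ (∀ᵐ u : Fin n → UnitAddCircle, u ∈ WC n ψ) := by
  induction n with
  | zero =>
    intro ψ
    by_cases h : {q : ℕ | 0 < q ∧ 1 < ψ q}.Infinite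
    · right; exact Eventually.of_forall fun u => by simpa [WC] using h
    · left; exact Eventually.of_forall fun u => by simpa [WC] using h
  | succ n ih =>
    intro ψ
    have mp := volume_preserving_piFinSuccAbove (fun _ : Fin (n + 1) => UnitAddCircle) 0
    set e := MeasurableEquiv.piFinSuccAbove (fun _ : Fin (n + 1) => UnitAddCircle) 0 with he
    set A : Set (UnitAddCircle × (Fin n → UnitAddCircle)) :=
      {p | {q : ℕ | 0 < q ∧ ‖q • p.1‖ * ∏ i, ‖q • p.2 i‖ < ψ q}.Infinite} with hAdef
    have hpre : ∀ u, u ∈ WC (n + 1) ψ ↔ e u ∈ A := by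
      intro u
      simp only [WC, hAdef, Set.mem_ofPred_eq, Fin.prod_univ_succ]
      rfl
    have hA : MeasurableSet A := by
      have : A = e.symm ⁻¹' (WC (n + 1) ψ) := by
        ext p
        simp [hpre]
      rw [this]
      exact e.symm.measurable (measurableSet_WC _ _)
    have hmain := prod_zero_one (volume : Measure UnitAddCircle)
      (volume : Measure (Fin n → UnitAddCircle)) A hA ?_ ?_
    · rcases hmain with h | h
      · left
        filter_upwards [mp.quasiMeasurePreserving.ae h] with u hu
        rwa [hpre]
      · right
        filter_upwards [mp.quasiMeasurePreserving.ae h] with u hu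
        rwa [hpre]
    · filter_upwards [ae_not_torsion] with x hx
      have heq : ∀ y, (x, y) ∈ A ↔ y ∈ WC n (fun q => ψ q / ‖q • x‖) := by
        intro y
        simp only [hAdef, WC, Set.mem_ofPred_eq]
        refine iff_of_eq (congr_arg Set.Infinite (Set.ext fun q => ?_))
        refine and_congr_right fun hq => ?_
        rw [lt_div_iff₀ (norm_pos_iff.2 (hx q hq)), mul_comm]
      simp only [heq]
      exact ih _
    · have hy : ∀ᵐ y : Fin n → UnitAddCircle, ∀ i, ∀ b : ℕ, 0 < b → b • y i ≠ 0 := by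
        rw [ae_all_iff]
        intro i
        exact (measurePreserving_eval (fun _ : Fin n => (volume : Measure UnitAddCircle)) i).quasiMeasurePreserving.ae
          ae_not_torsion
      filter_upwards [hy] with y hy
      have heq : ∀ x, (x, y) ∈ A ↔
          {q : ℕ | 0 < q ∧ ‖q • x‖ < ψ q / ∏ i, ‖q • y i‖}.Infinite := by
        intro x
        simp only [hAdef, Set.mem_ofPred_eq]
        refine iff_of_eq (congr_arg Set.Infinite (Set.ext fun q => ?_))
        refine and_congr_right fun hq => ?_
        rw [lt_div_iff₀ (Finset.prod_pos fun i _ => norm_pos_iff.2 (hy i q hq))]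
      simp only [heq]
      exact one_dim _

lemma distNearestInt_eq (y : ℝ) : distNearestInt y = ‖(y : UnitAddCircle)‖ := by
  rw [UnitAddCircle.norm_eq, distNearestInt]
  refine le_antisymm ?_ (le_ciInf fun p => round_le y p)
  exact ciInf_le ⟨0, by rintro _ ⟨p, rfl⟩; exact abs_nonneg _⟩ (round y)

/-- Multiplicative zero-one law: for any `n ≥ 1` and any non-negative `ψ`,
the Lebesgue measure of `S^×_n(ψ)` is either 0 or 1. -/
theorem multiplicative_zero_one_law_S (n : ℕ) (hn : 1 ≤ n)
    (ψ : ℕ → ℝ) (hψ : ∀ q, 0 ≤ ψ q) :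
    volume (Smul n ψ) = 0 ∨ volume (Smul n ψ) = 1 := by
  set π : (Fin n → ℝ) → (Fin n → UnitAddCircle) := fun x i => (x i : UnitAddCircle) with hπ
  have hmp : MeasurePreserving π
      (volume.restrict (Set.univ.pi fun _ => Set.Icc (0 : ℝ) 1)) volume := by
    have h1 := UnitAddCircle.measurePreserving_mk 0
    rw [zero_add, restrict_Ioc_eq_restrict_Icc] at h1
    have := measurePreserving_pi (fun _ : Fin n => (volume : Measure ℝ).restrict (Set.Icc 0 1))
      (fun _ : Fin n => (volume : Measure UnitAddCircle)) (fun _ => h1)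
    rw [← Measure.restrict_pi_pi] at this
    exact this
  have hS : Smul n ψ = π ⁻¹' (WC n ψ) ∩ (Set.univ.pi fun _ => Set.Icc (0 : ℝ) 1) := by
    ext x
    have : ∀ (q : ℕ) (i : Fin n), distNearestInt (q * x i) = ‖q • π x i‖ := by
      intro q i
      rw [distNearestInt_eq, ← nsmul_eq_mul]; rfl
    simp only [Smul, WC, Set.mem_ofPred_eq, this, Set.mem_inter_iff, Set.mem_preimage, Set.mem_univ_pi]
    tauto
  have hv : volume (Smul n ψ) = volume (WC n ψ) := by
    rw [hS, ← hmp.measure_preimage (measurableSet_WC n ψ).nullMeasurableSet,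
      Measure.restrict_apply (hmp.measurable (measurableSet_WC n ψ))]
  rw [hv]
  rcases multi_dim n ψ with h | h
  · left; exact measure_eq_zero_iff_ae_notMem.2 h
  · right
    have hu : WC n ψ =ᵐ[volume] Set.univ := eventuallyEq_univ.2 h
    rw [measure_congr hu]
    rw [volume_pi, ← Set.pi_univ Set.univ, Measure.pi_pi]
    simp
end

section
/- Let n ≥ 1 and let ψ : ℕ → [0,∞) be any non-negative function. Then the n-dimensional Lebesgue measure of the multiplicative approximation set with coprimality D^×_n(ψ) is either 0 or 1. -/
open MeasureTheory Filter

/-- The distance from a real number `y` to the nearest integer coprime to `q`: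
`‖y‖' = min {|y - p| : p ∈ ℤ, gcd(p,q) = 1}`. -/
noncomputable def distNearestCoprime (q : ℕ) (y : ℝ) : ℝ :=
  sInf {d : ℝ | ∃ p : ℤ, Int.gcd p (q : ℤ) = 1 ∧ d = |y - (p : ℝ)|}

/-- The multiplicative approximation set with the coprimality condition:
`D^×_n(ψ) = {x ∈ [0,1]^n : ∏ᵢ ‖q xᵢ‖' < ψ(q) for infinitely many q ∈ ℕ}`. -/
def Dmul (n : ℕ) (ψ : ℕ → ℝ) : Set (Fin n → ℝ) :=
  {x | (∀ i, x i ∈ Set.Icc (0 : ℝ) 1) ∧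
    {q : ℕ | 0 < q ∧ ∏ i, distNearestCoprime q (q * x i) < ψ q}.Infinite}

/-- Cross fibering principle. -/
theorem cross_fibering {X Y : Type*} [MeasurableSpace X] [MeasurableSpace Y]
    (μ : Measure X) (ν : Measure Y) [IsProbabilityMeasure μ] [IsProbabilityMeasure ν]
    (E : Set (X × Y)) (hE : MeasurableSet E)
    (h1 : ∀ᵐ x ∂μ, ν (Prod.mk x ⁻¹' E) = 0 ∨ ν (Prod.mk x ⁻¹' E) = 1)
    (h2 : ∀ᵐ y ∂ν, μ ((fun x => (x, y)) ⁻¹' E) = 0 ∨ μ ((fun x => (x, y)) ⁻¹' E) = 1) :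
    (μ.prod ν) E = 0 ∨ (μ.prod ν) E = 1 := by
  have hf : Measurable fun x => ν (Prod.mk x ⁻¹' E) := measurable_measure_prodMk_left hE
  have hg : Measurable fun y => μ ((fun x => (x, y)) ⁻¹' E) := measurable_measure_prodMk_right hE
  set X0 : Set X := {x | ν (Prod.mk x ⁻¹' E) = 1} with hX0
  set Y0 : Set Y := {y | μ ((fun x => (x, y)) ⁻¹' E) = 1} with hY0
  have mX0 : MeasurableSet X0 := hf (measurableSet_singleton 1)
  have mY0 : MeasurableSet Y0 := hg (measurableSet_singleton 1)
  have e1 : (μ.prod ν) E = μ X0 := by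
    rw [Measure.prod_apply hE, ← lintegral_indicator_one mX0]
    refine lintegral_congr_ae ?_
    filter_upwards [h1] with x hx
    by_cases hxx : x ∈ X0
    · simp only [Set.indicator_of_mem hxx, Pi.one_apply]; exact hxx
    · simp only [Set.indicator_of_notMem hxx]
      exact hx.resolve_right hxx
  have e2 : (μ.prod ν) E = ν Y0 := by
    rw [Measure.prod_apply_symm hE, ← lintegral_indicator_one mY0]
    refine lintegral_congr_ae ?_
    filter_upwards [h2] with x hx
    by_cases hxx : x ∈ Y0
    · simp only [Set.indicator_of_mem hxx, Pi.one_apply]; exact hxx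
    · simp only [Set.indicator_of_notMem hxx]
      exact hx.resolve_right hxx
  have n1 : (μ.prod ν) (E \ (X0 ×ˢ Set.univ)) = 0 := by
    rw [Measure.prod_apply (hE.diff (mX0.prod MeasurableSet.univ)),
      lintegral_eq_zero_iff (measurable_measure_prodMk_left (hE.diff (mX0.prod MeasurableSet.univ)))]
    filter_upwards [h1] with x hx
    by_cases hxx : x ∈ X0
    · have h0 : Prod.mk x ⁻¹' (E \ (X0 ×ˢ Set.univ)) = ∅ := by ext y; simp [hxx]
      simp only [h0, measure_empty, Pi.zero_apply]
    · exact measure_mono_null (fun y hy => hy.1) (hx.resolve_right hxx)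
  have n2 : (μ.prod ν) (E \ (Set.univ ×ˢ Y0)) = 0 := by
    rw [Measure.prod_apply_symm (hE.diff (MeasurableSet.univ.prod mY0)),
      lintegral_eq_zero_iff (measurable_measure_prodMk_right (hE.diff (MeasurableSet.univ.prod mY0)))]
    filter_upwards [h2] with x hx
    by_cases hxx : x ∈ Y0
    · have h0 : (fun z => (z, x)) ⁻¹' (E \ (Set.univ ×ˢ Y0)) = ∅ := by ext y; simp [hxx]
      simp only [h0, measure_empty, Pi.zero_apply]
    · exact measure_mono_null (fun y hy => hy.1) (hx.resolve_right hxx)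
  have key : (μ.prod ν) E ≤ (μ.prod ν) E * (μ.prod ν) E := by
    calc (μ.prod ν) E ≤ (μ.prod ν) ((X0 ×ˢ Y0) ∪ (E \ (X0 ×ˢ Set.univ)) ∪ (E \ (Set.univ ×ˢ Y0))) := by
          refine measure_mono ?_
          rintro ⟨x, y⟩ h
          simp only [Set.mem_union, Set.mem_prod, Set.mem_sdiff, Set.mem_univ, and_true, true_and]
          tauto
      _ ≤ (μ.prod ν) (X0 ×ˢ Y0) + (μ.prod ν) (E \ (X0 ×ˢ Set.univ))
            + (μ.prod ν) (E \ (Set.univ ×ˢ Y0)) :=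
          (measure_union_le _ _).trans (add_le_add (measure_union_le _ _) le_rfl)
      _ = (μ.prod ν) E * (μ.prod ν) E := by
          rw [n1, n2, Measure.prod_prod, ← e1, ← e2]; simp
  by_cases h0 : (μ.prod ν) E = 0
  · exact Or.inl h0
  · right
    refine le_antisymm prob_le_one ?_
    by_contra hlt
    rw [not_le] at hlt
    have := ENNReal.mul_lt_mul_right h0 (measure_ne_top _ _) hlt
    rw [mul_one] at this
    exact absurd key (not_le.mpr this)

theorem dnc_nonempty (q : ℕ) (y : ℝ) :
    {d : ℝ | ∃ p : ℤ, Int.gcd p (q : ℤ) = 1 ∧ d = |y - (p : ℝ)|}.Nonempty :=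
  ⟨_, 1, by simp, rfl⟩

theorem dnc_bdd (q : ℕ) (y : ℝ) :
    BddBelow {d : ℝ | ∃ p : ℤ, Int.gcd p (q : ℤ) = 1 ∧ d = |y - (p : ℝ)|} :=
  ⟨0, by rintro _ ⟨p, -, rfl⟩; exact abs_nonneg _⟩

theorem dnc_lt_iff (q : ℕ) (y c : ℝ) :
    distNearestCoprime q y < c ↔ ∃ p : ℤ, Int.gcd p (q : ℤ) = 1 ∧ |y - (p : ℝ)| < c := by
  unfold distNearestCoprime
  rw [csInf_lt_iff (dnc_bdd q y) (dnc_nonempty q y)]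
  constructor
  · rintro ⟨_, ⟨p, hp, rfl⟩, h⟩; exact ⟨p, hp, h⟩
  · rintro ⟨p, hp, h⟩; exact ⟨_, ⟨p, hp, rfl⟩, h⟩

theorem dnc_measurable (q : ℕ) : Measurable (distNearestCoprime q) := by
  refine measurable_of_Iio fun c => ?_
  have : distNearestCoprime q ⁻¹' Set.Iio c
      = ⋃ p : ℤ, ⋃ _ : Int.gcd p (q : ℤ) = 1, {y : ℝ | |y - (p : ℝ)| < c} := by
    ext y; simp [dnc_lt_iff]
  rw [this]
  refine MeasurableSet.iUnion fun p => MeasurableSet.iUnion fun _ => ?_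
  exact measurableSet_lt (by fun_prop) measurable_const

theorem dnc_pos (q : ℕ) (hq : 0 < q) (x : ℝ) (hx : Irrational x) :
    0 < distNearestCoprime q (q * x) := by
  have hirr : Irrational ((q : ℝ) * x) := hx.natCast_mul hq.ne'
  have hr : 0 < |(q : ℝ) * x - round ((q : ℝ) * x)| :=
    abs_pos.mpr (sub_ne_zero.mpr (hirr.ne_int _))
  refine lt_of_lt_of_le hr (le_csInf (dnc_nonempty q _) ?_)
  rintro _ ⟨p, -, rfl⟩
  exact round_le _ p

/-- The set without the restriction to the unit cube. -/
def Emul (n : ℕ) (ψ : ℕ → ℝ) : Set (Fin n → ℝ) :=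
  {x | {q : ℕ | 0 < q ∧ ∏ i, distNearestCoprime q (q * x i) < ψ q}.Infinite}

theorem measurableSet_infinite {X : Type*} [MeasurableSpace X] (P : ℕ → X → Prop)
    (h : ∀ q, MeasurableSet {x | P q x}) : MeasurableSet {x | {q | P q x}.Infinite} := by
  have : {x | {q | P q x}.Infinite} = ⋂ N : ℕ, ⋃ q : ℕ, ⋃ _ : N < q, {x | P q x} := by
    ext x
    simp only [Set.mem_ofPred_eq, Set.mem_iInter, Set.mem_iUnion]
    rw [Set.infinite_iff_exists_gt]
    simp only [Set.mem_ofPred_eq, exists_prop]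
    exact forall_congr' fun N => exists_congr fun q => and_comm
  rw [this]
  exact MeasurableSet.iInter fun N => MeasurableSet.iUnion fun q => MeasurableSet.iUnion fun _ => h q

theorem Emul_measurable (n : ℕ) (ψ : ℕ → ℝ) : MeasurableSet (Emul n ψ) := by
  refine measurableSet_infinite
    (fun q (x : Fin n → ℝ) => 0 < q ∧ ∏ i, distNearestCoprime q (q * x i) < ψ q) fun q => ?_
  simp only [Set.ofPred_and]
  refine MeasurableSet.inter (MeasurableSet.const _) (measurableSet_lt ?_ measurable_const)
  refine Finset.measurable_prod _ fun i _ => (dnc_measurable q).comp ?_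
  fun_prop

/-- One-dimensional set. -/
def Eone (ψ : ℕ → ℝ) : Set ℝ :=
  {x | {q : ℕ | 0 < q ∧ distNearestCoprime q (q * x) < ψ q}.Infinite}

theorem Eone_measurable (ψ : ℕ → ℝ) : MeasurableSet (Eone ψ) := by
  refine measurableSet_infinite
    (fun q (x : ℝ) => 0 < q ∧ distNearestCoprime q (q * x) < ψ q) fun q => ?_
  simp only [Set.ofPred_and]
  refine MeasurableSet.inter (MeasurableSet.const _) (measurableSet_lt ?_ measurable_const)
  exact (dnc_measurable q).comp (by fun_prop)

/-- Every real is close to a reduced fraction with given large denominator. -/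
theorem exists_coprime_near (N q : ℕ) (hN : 0 < N) (hq : N.factorial < q) (y : ℝ) :
    ∃ p : ℤ, Int.gcd p (q : ℤ) = 1 ∧ |y - p| < (q : ℝ) / N := by
  have hq0 : q ≠ 0 := by omega
  obtain ⟨p, hp, hpN⟩ : ∃ p : ℕ, p.Prime ∧ N < p ^ q.factorization p := by
    by_contra hcon
    push Not at hcon
    have : q ∣ N.factorial := by
      rw [← Nat.factorization_le_iff_dvd hq0 (Nat.factorial_ne_zero N)]
      intro p
      by_cases hp : p.Prime
      · rw [← hp.pow_dvd_iff_le_factorization (Nat.factorial_ne_zero N)]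
        exact Nat.dvd_factorial (pow_pos hp.pos _) (hcon p hp)
      · simp [Nat.factorization_eq_zero_of_not_prime _ hp]
    exact absurd (Nat.le_of_dvd (Nat.factorial_pos N) this) (by omega)
  set P := p ^ q.factorization p with hP
  set m := q / P with hm
  have hqm : P * m = q := Nat.ordProj_mul_ordCompl_eq_self q p
  have hpm : Nat.Coprime p m := Nat.coprime_ordCompl hp hq0
  have hm0 : 0 < m := Nat.pos_of_ne_zero (by rintro h; rw [h] at hqm; omega)
  have hPpos : 0 < P := by omega
  obtain ⟨s, hs, hsy⟩ : ∃ s : ℤ, ¬ (p : ℤ) ∣ s ∧ |(y - P) / m - s| ≤ 1 := by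
    set z := (y - P) / (m : ℝ)
    by_cases h : (p : ℤ) ∣ ⌊z⌋
    · refine ⟨⌊z⌋ + 1, fun h' => ?_, ?_⟩
      · have := (Int.dvd_add_right h).mp h'
        have h3 : p ∣ 1 := by exact_mod_cast this
        exact hp.one_lt.ne' (Nat.dvd_one.mp h3)
      · push_cast
        rw [abs_le]; constructor <;> linarith [Int.floor_le z, Int.lt_floor_add_one z]
    · refine ⟨⌊z⌋, h, ?_⟩
      rw [abs_le]; constructor <;> linarith [Int.floor_le z, Int.lt_floor_add_one z]
  refine ⟨m * s + P, ?_, ?_⟩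
  · rw [← Int.isCoprime_iff_gcd_eq_one, ← hqm]
    push_cast
    have hpZ : Prime (p : ℤ) := Nat.prime_iff_prime_int.mp hp
    have hps : IsCoprime (p : ℤ) s := (hpZ.coprime_iff_not_dvd).mpr hs
    have hpmZ : IsCoprime (p : ℤ) (m : ℤ) := Nat.isCoprime_iff_coprime.mpr hpm
    have hPm : IsCoprime (P : ℤ) (m : ℤ) := by rw [hP]; push_cast; exact hpmZ.pow_left
    have hPs : IsCoprime (P : ℤ) s := by rw [hP]; push_cast; exact hps.pow_left
    refine IsCoprime.mul_right ?_ ?_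
    · have := (hPm.mul_right hPs).symm.add_mul_left_left 1
      simpa using this
    · have := hPm.add_mul_left_left s
      rwa [add_comm] at this
  · have hmR : (0 : ℝ) < m := by exact_mod_cast hm0
    have hNR : (0 : ℝ) < N := by exact_mod_cast hN
    have e : y - ((m * s + P : ℤ) : ℝ) = m * ((y - P) / m - s) := by
      push_cast; field_simp; ring
    rw [e, abs_mul, abs_of_pos hmR]
    have h1 : (m : ℝ) * |(y - P) / m - s| ≤ m := by nlinarith
    refine lt_of_le_of_lt h1 ?_
    rw [lt_div_iff₀ hNR]
    have : (P : ℝ) * m = q := by exact_mod_cast hqm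
    have h2 : (N : ℝ) < P := by exact_mod_cast hpN
    nlinarith

theorem mem_Eone_iff (ψ : ℕ → ℝ) (x : ℝ) :
    x ∈ Eone ψ ↔ (x : UnitAddCircle) ∈ addWellApproximable UnitAddCircle (fun q => ψ q / q) := by
  rw [UnitAddCircle.mem_addWellApproximable_iff]
  unfold Eone
  rw [Set.mem_ofPred_eq]
  refine iff_of_eq (congr_arg Set.Infinite (Set.ext fun q => ?_))
  simp only [Set.mem_ofPred_eq, dnc_lt_iff]
  constructor
  · rintro ⟨hq, p, hp, h⟩
    have hqR : (0 : ℝ) < q := by exact_mod_cast hq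
    have hqZ : (0 : ℤ) < q := by exact_mod_cast hq
    have hnn := Int.emod_nonneg p hqZ.ne'
    refine ⟨(p % q).toNat, ?_, ?_, ?_⟩
    · have := Int.emod_lt_of_pos p hqZ
      omega
    · have h1 : Int.gcd (p % q) q = 1 := by rwa [Int.gcd_emod] 
      have h2 : (((p % q).toNat : ℤ)) = p % q := Int.toNat_of_nonneg hnn
      rw [← h2] at h1
      rw [Int.gcd_natCast_natCast] at h1
      exact h1
    · have h2 : (((p % q).toNat : ℝ)) = ((p % q : ℤ) : ℝ) := by
        exact_mod_cast congrArg (Int.cast (R := ℝ)) (Int.toNat_of_nonneg hnn)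
      have h3 : ((p % q : ℤ) : ℝ) = p - q * (p / q : ℤ) := by
        rw [Int.emod_def]; push_cast; ring
      have h4 : ((x : UnitAddCircle) - (((p % q).toNat : ℝ) / q : ℝ)) = ((x - p / q : ℝ) : UnitAddCircle) := by
        rw [h2, h3]
        have : ((p : ℝ) - q * (p / q : ℤ)) / q = p / q - (p / q : ℤ) := by field_simp
        rw [this]
        rw [← AddCircle.coe_sub, ← sub_eq_zero, ← AddCircle.coe_sub, AddCircle.coe_eq_zero_iff]
        exact ⟨p / q, by simp only [zsmul_eq_mul]; ring⟩
      rw [h4]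
      refine lt_of_le_of_lt (b := |x - p / q|) ?_ ?_
      · rw [UnitAddCircle.norm_eq]
        simpa using round_le (x - p / q) 0
      · rw [lt_div_iff₀ hqR, ← abs_of_pos hqR, ← abs_mul, abs_of_pos hqR]
        have h5 : (x - p / q) * q = q * x - p := by field_simp
        rw [h5]; exact h
  · rintro ⟨m, hm, hg, h⟩
    have hq : 0 < q := by omega
    have hqR : (0 : ℝ) < q := by exact_mod_cast hq
    refine ⟨hq, m + q * round (x - m / q), ?_, ?_⟩
    · rw [Int.gcd_add_mul_left_left]
      rw [Int.gcd_natCast_natCast]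
      exact hg
    · rw [← AddCircle.coe_sub, UnitAddCircle.norm_eq, lt_div_iff₀ hqR, ← abs_of_pos hqR, ← abs_mul,
        abs_of_pos hqR] at h
      have h5 : (x - m / q - round (x - m / q)) * q
          = q * x - ((m + q * round (x - m / q) : ℤ) : ℝ) := by
        push_cast; field_simp; ring
      rw [h5] at h; exact h

/-- Gallagher's theorem for arbitrary functions, on the unit interval. -/
theorem Eone_zero_one (ψ : ℕ → ℝ) :
    (volume.restrict (Set.Ioc (0 : ℝ) 1)) (Eone ψ) = 0 ∨
      (volume.restrict (Set.Ioc (0 : ℝ) 1)) (Eone ψ) = 1 := by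
  have hprob : (volume.restrict (Set.Ioc (0 : ℝ) 1)) Set.univ = 1 := by simp
  by_cases hlarge : ∃ N : ℕ, 0 < N ∧ {q : ℕ | (q : ℝ) / N ≤ ψ q}.Infinite
  · obtain ⟨N, hN, hinf⟩ := hlarge
    right
    have : Eone ψ = Set.univ := by
      refine Set.eq_univ_of_forall fun x => ?_
      refine (hinf.sdiff (Set.finite_Iic N.factorial)).mono ?_
      rintro q ⟨hq1, hq2⟩
      rw [Set.mem_Iic, not_le] at hq2
      refine ⟨by omega, (dnc_lt_iff _ _ _).mpr ?_⟩
      obtain ⟨p, hp, h⟩ := exists_coprime_near N q hN hq2 (q * x)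
      exact ⟨p, hp, h.trans_le hq1⟩
    rw [this, hprob]
  · push Not at hlarge
    set ψ' : ℕ → ℝ := fun q => max (ψ q) 0 with hψ'
    have hE : Eone ψ' = Eone ψ := by
      unfold Eone
      ext x
      simp only [Set.mem_ofPred_eq]
      refine iff_of_eq (congr_arg Set.Infinite (Set.ext fun q => ?_))
      simp only [Set.mem_ofPred_eq, hψ', lt_max_iff]
      have : ¬ distNearestCoprime q (q * x) < 0 := by
        rw [dnc_lt_iff]; rintro ⟨p, -, h⟩; exact absurd h (not_lt.mpr (abs_nonneg _))
      tauto
    have ht : Tendsto (fun q : ℕ => ψ' q / q) atTop (nhds 0) := by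
      rw [Metric.tendsto_atTop]
      intro ε hε
      obtain ⟨N, hN⟩ := exists_nat_one_div_lt hε
      have hfin := hlarge (N + 1) (by omega)
      obtain ⟨M, hM⟩ := hfin.bddAbove
      refine ⟨M + 1, fun q hq => ?_⟩
      have hqR : (0 : ℝ) < q := by exact_mod_cast (by omega : 0 < q)
      have h1 : ψ q < q / ((N + 1 : ℕ) : ℝ) := by
        by_contra hcon
        have := hM (show q ∈ _ from not_lt.mp hcon)
        omega
      have h0 : 0 ≤ ψ' q := le_max_right _ _
      rw [Real.dist_eq, sub_zero, abs_of_nonneg (by positivity), div_lt_iff₀ hqR]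
      refine max_lt ?_ (by positivity)
      refine h1.trans ?_
      rw [div_eq_mul_one_div, mul_comm]
      push_cast
      exact mul_lt_mul_of_pos_right hN hqR
    have hmp := UnitAddCircle.measurePreserving_mk 0
    rw [zero_add] at hmp
    have hpre : Eone ψ = (fun x : ℝ => (x : UnitAddCircle)) ⁻¹'
        addWellApproximable UnitAddCircle (fun q => ψ' q / q) := by
      ext x; rw [← hE, mem_Eone_iff]; rfl
    have hm : MeasurableSet (addWellApproximable UnitAddCircle (fun q => ψ' q / q)) :=
      MeasurableSet.measurableSet_blimsup fun n hn => Metric.isOpen_thickening.measurableSet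
    rw [hpre]
    rw [hmp.measure_preimage hm.nullMeasurableSet]
    rcases AddCircle.addWellApproximable_ae_empty_or_univ (T := 1) _ ht with h | h
    · left
      exact measure_eq_zero_iff_ae_notMem.mpr h
    · right
      refine (measure_congr (eventuallyEq_univ.mpr h)).trans ?_
      exact UnitAddCircle.measure_univ

theorem ae_irr : ∀ᵐ x ∂(volume.restrict (Set.Ioc (0 : ℝ) 1)), Irrational x := by
  refine ae_restrict_of_ae ?_
  have : (Set.range ((↑) : ℚ → ℝ)).Countable := Set.countable_range _
  exact (this.ae_notMem volume)

theorem Emul_zero_one (n : ℕ) : ∀ ψ : ℕ → ℝ,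
    (Measure.pi fun _ : Fin n => volume.restrict (Set.Ioc (0 : ℝ) 1)) (Emul n ψ) = 0 ∨
      (Measure.pi fun _ : Fin n => volume.restrict (Set.Ioc (0 : ℝ) 1)) (Emul n ψ) = 1 := by
  have hp : IsProbabilityMeasure (volume.restrict (Set.Ioc (0 : ℝ) 1)) := ⟨by simp⟩
  induction n with
  | zero =>
    intro ψ
    by_cases h : {q : ℕ | 0 < q ∧ 1 < ψ q}.Infinite
    · right
      have : Emul 0 ψ = Set.univ := Set.eq_univ_of_forall fun x => by
        simpa [Emul] using h
      rw [this, measure_univ]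
    · left
      have : Emul 0 ψ = ∅ := Set.eq_empty_of_forall_notMem fun x => by
        simpa [Emul] using h
      rw [this, measure_empty]
  | succ n ih =>
    intro ψ
    set μ := volume.restrict (Set.Ioc (0 : ℝ) 1) with hμ
    set ν := Measure.pi fun _ : Fin n => μ with hν
    have hmp := (measurePreserving_piFinSuccAbove (fun _ : Fin (n + 1) => μ) 0).symm
    have hm := Emul_measurable (n + 1) ψ
    rw [← hmp.measure_preimage hm.nullMeasurableSet]
    refine cross_fibering μ ν _ (hmp.measurable hm) ?_ ?_
    · filter_upwards [ae_irr] with x hx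
      have : Prod.mk x ⁻¹' ((MeasurableEquiv.piFinSuccAbove (fun _ : Fin (n+1) => ℝ) 0).symm ⁻¹'
          Emul (n + 1) ψ) = Emul n (fun q => ψ q / distNearestCoprime q (q * x)) := by
        ext z
        simp only [Set.mem_preimage, Emul, Set.mem_ofPred_eq]
        refine iff_of_eq (congr_arg Set.Infinite (Set.ext fun q => ?_))
        simp only [Set.mem_ofPred_eq]
        refine and_congr_right fun hq => ?_
        rw [lt_div_iff₀ (dnc_pos q hq x hx), Fin.prod_univ_succ, mul_comm]
        simp [MeasurableEquiv.piFinSuccAbove, Fin.insertNthEquiv]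
      rw [this]
      exact ih _
    · have hirr : ∀ᵐ z ∂ν, ∀ i, Irrational (z i) :=
        ae_all_iff.mpr fun i => (measurePreserving_eval (fun _ : Fin n => μ) i).quasiMeasurePreserving.ae ae_irr
      filter_upwards [hirr] with z hz
      have : (fun x => (x, z)) ⁻¹' ((MeasurableEquiv.piFinSuccAbove (fun _ : Fin (n+1) => ℝ) 0).symm ⁻¹'
          Emul (n + 1) ψ) = Eone (fun q => ψ q / ∏ i, distNearestCoprime q (q * z i)) := by
        ext x
        simp only [Set.mem_preimage, Emul, Eone, Set.mem_ofPred_eq]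
        refine iff_of_eq (congr_arg Set.Infinite (Set.ext fun q => ?_))
        simp only [Set.mem_ofPred_eq]
        refine and_congr_right fun hq => ?_
        rw [lt_div_iff₀ (Finset.prod_pos fun i _ => dnc_pos q hq _ (hz i)), Fin.prod_univ_succ]
        simp [MeasurableEquiv.piFinSuccAbove, Fin.insertNthEquiv]
      rw [this]
      exact Eone_zero_one _

/-- Multiplicative zero-one law with coprimality: for any `n ≥ 1` and any
non-negative `ψ`, the Lebesgue measure of `D^×_n(ψ)` is either 0 or 1. -/
theorem multiplicative_zero_one_law_D (n : ℕ) (hn : 1 ≤ n)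
    (ψ : ℕ → ℝ) (hψ : ∀ q, 0 ≤ ψ q) :
    volume (Dmul n ψ) = 0 ∨ volume (Dmul n ψ) = 1 := by
  have h := Emul_zero_one n ψ
  have e : (Measure.pi fun _ : Fin n => volume.restrict (Set.Ioc (0 : ℝ) 1)) (Emul n ψ)
      = volume (Dmul n ψ) := by
    have : volume.restrict (Set.Ioc (0 : ℝ) 1) = volume.restrict (Set.Icc (0 : ℝ) 1) :=
      Measure.restrict_congr_set Ioc_ae_eq_Icc
    rw [this, ← Measure.restrict_pi_pi, Measure.restrict_apply (Emul_measurable n ψ), ← volume_pi]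
    congr 1
    ext x
    simp only [Set.mem_inter_iff, Emul, Dmul, Set.mem_ofPred_eq, Set.mem_pi, Set.mem_univ,
      true_imp_iff]
    tauto
  rwa [e] at h
end

section
/- (Cross fibering principle.) Let μ be a σ-finite measure on a measurable space X, let ν be a σ-finite measure on a measurable space Y, and let S ⊂ X × Y be measurable with respect to the product measure μ × ν. Then S is (μ × ν)-trivial if and only if: for μ-almost every x ∈ X the fiber S_x := {y ∈ Y : (x,y) ∈ S} is ν-trivial, and for ν-almost every y ∈ Y the fiber S^y := {x ∈ X : (x,y) ∈ S} is μ-trivial. -/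
open MeasureTheory Filter

theorem ae_swap_aux {X Y : Type*} [MeasurableSpace X] [MeasurableSpace Y]
    (μ : Measure X) (ν : Measure Y) [SigmaFinite μ] [SigmaFinite ν]
    {p : X × Y → Prop} (h : ∀ᵐ z ∂(μ.prod ν), p z) : ∀ᵐ y ∂ν, ∀ᵐ x ∂μ, p (x, y) := by
  have h2 : ∀ᵐ z ∂(ν.prod μ), p z.swap :=
    (Measure.measurePreserving_swap (μ := ν) (ν := μ)).quasiMeasurePreserving.ae h
  exact Measure.ae_ae_of_ae_prod h2

theorem cross_meas_aux {X Y : Type*} [MeasurableSpace X] [MeasurableSpace Y]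
    (μ : Measure X) (ν : Measure Y) [SigmaFinite μ] [SigmaFinite ν]
    (T : Set (X × Y)) (hT : MeasurableSet T)
    (h1 : ∀ᵐ x ∂μ, ν {y | (x, y) ∈ T} = 0 ∨ ν {y | (x, y) ∈ T}ᶜ = 0)
    (h2 : ∀ᵐ y ∂ν, μ {x | (x, y) ∈ T} = 0 ∨ μ {x | (x, y) ∈ T}ᶜ = 0) :
    (μ.prod ν) T = 0 ∨ (μ.prod ν) Tᶜ = 0 := by
  have hA : MeasurableSet {x | ν {y | (x, y) ∈ T} = 0} :=
    (measurable_measure_prodMk_left (ν := ν) hT) (measurableSet_singleton 0)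
  have hB : MeasurableSet {y | μ {x | (x, y) ∈ T} = 0} :=
    (measurable_measure_prodMk_right (μ := μ) hT) (measurableSet_singleton 0)
  set A := {x | ν {y | (x, y) ∈ T} = 0} with hAd
  set B := {y | μ {x | (x, y) ∈ T} = 0} with hBd
  have e1 : (μ.prod ν) (T ∩ A ×ˢ Set.univ) = 0 := by
    rw [Measure.measure_prod_null (hT.inter (hA.prod MeasurableSet.univ))]
    refine Eventually.of_forall fun x => ?_
    by_cases hx : x ∈ A
    · exact measure_mono_null (fun y hy => hy.1) hx
    · refine measure_mono_null (t := ∅) (fun y hy => hx hy.2.1) measure_empty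
  have e2 : (μ.prod ν) (Tᶜ ∩ Set.univ ×ˢ Bᶜ) = 0 := by
    rw [Measure.prod_apply_symm (hT.compl.inter (MeasurableSet.univ.prod hB.compl)),
      lintegral_eq_zero_iff (measurable_measure_prodMk_right
        (hT.compl.inter (MeasurableSet.univ.prod hB.compl)))]
    filter_upwards [h2] with y hy
    by_cases hyB : y ∈ B
    · exact measure_mono_null (t := ∅) (fun x hx => hx.2.2 hyB) measure_empty
    · exact measure_mono_null (fun x hx => hx.1) (hy.resolve_left hyB)
  have e3 : (μ.prod ν) (A ×ˢ Bᶜ) = 0 := by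
    refine measure_mono_null ?_ (measure_union_null e1 e2)
    rintro z ⟨hz1, hz2⟩
    by_cases hz : z ∈ T
    · exact Or.inl ⟨hz, hz1, trivial⟩
    · exact Or.inr ⟨hz, trivial, hz2⟩
  rw [Measure.prod_prod, mul_eq_zero] at e3
  rcases e3 with h | h
  · right
    rw [Measure.measure_prod_null hT.compl]
    have h' : ∀ᵐ x ∂μ, x ∉ A := measure_eq_zero_iff_ae_notMem.1 h
    filter_upwards [h1, h'] with x hx hxA
    exact hx.resolve_left hxA
  · left
    rw [Measure.prod_apply_symm hT, lintegral_eq_zero_iff (measurable_measure_prodMk_right hT)]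
    have h' : ∀ᵐ y ∂ν, y ∉ Bᶜ := measure_eq_zero_iff_ae_notMem.1 h
    filter_upwards [h'] with y hy
    exact not_not.1 hy

/-- The cross fibering principle: for σ-finite measures `μ` on `X` and `ν` on `Y`
and a `μ × ν`-measurable set `S ⊆ X × Y`, the set `S` is `μ × ν`-trivial
(null or co-null) if and only if `μ`-a.e. fiber `S_x` is `ν`-trivial and
`ν`-a.e. fiber `S^y` is `μ`-trivial. -/
theorem cross_fibering_principle {X Y : Type*} [MeasurableSpace X] [MeasurableSpace Y]
    (μ : Measure X) (ν : Measure Y) [SigmaFinite μ] [SigmaFinite ν]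
    (S : Set (X × Y)) (hS : NullMeasurableSet S (μ.prod ν)) :
    ((μ.prod ν) S = 0 ∨ (μ.prod ν) Sᶜ = 0) ↔
      ((∀ᵐ x ∂μ, ν {y | (x, y) ∈ S} = 0 ∨ ν {y | (x, y) ∈ S}ᶜ = 0) ∧
       (∀ᵐ y ∂ν, μ {x | (x, y) ∈ S} = 0 ∨ μ {x | (x, y) ∈ S}ᶜ = 0)) := by
  constructor
  · rintro (h | h)
    · have h' := measure_eq_zero_iff_ae_notMem.1 h
      refine ⟨?_, ?_⟩
      · filter_upwards [Measure.ae_ae_of_ae_prod h'] with x hx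
        exact Or.inl (measure_eq_zero_iff_ae_notMem.2 hx)
      · filter_upwards [ae_swap_aux μ ν h'] with x hx
        exact Or.inl (measure_eq_zero_iff_ae_notMem.2 hx)
    · have h' := measure_eq_zero_iff_ae_notMem.1 h
      refine ⟨?_, ?_⟩
      · filter_upwards [Measure.ae_ae_of_ae_prod h'] with x hx
        exact Or.inr (measure_eq_zero_iff_ae_notMem.2 hx)
      · filter_upwards [ae_swap_aux μ ν h'] with x hx
        exact Or.inr (measure_eq_zero_iff_ae_notMem.2 hx)
  · rintro ⟨h1, h2⟩
    obtain ⟨T, hT, hST⟩ := hS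
    have h' : ∀ᵐ z ∂(μ.prod ν), (z ∈ S ↔ z ∈ T) := eventuallyEq_set.1 hST
    rw [measure_congr hST, measure_congr hST.compl]
    refine cross_meas_aux μ ν T hT ?_ ?_
    · filter_upwards [h1, Measure.ae_ae_of_ae_prod h'] with x hx hx'
      have e : {y | (x, y) ∈ S} =ᵐ[ν] {y | (x, y) ∈ T} := eventuallyEq_set.2 hx'
      rwa [measure_congr e, measure_congr e.compl] at hx
    · filter_upwards [h2, ae_swap_aux μ ν h'] with y hy hy'
      have e : {x | (x, y) ∈ S} =ᵐ[μ] {x | (x, y) ∈ T} := eventuallyEq_set.2 hy'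
      rwa [measure_congr e, measure_congr e.compl] at hy
end

section
/- (Sufficiency direction of the cross fibering principle.) Let μ be a σ-finite measure on a measurable space X, let ν be a σ-finite measure on a measurable space Y, and let S ⊂ X × Y be (μ × ν)-measurable. If for μ-almost every x ∈ X the fiber S_x is ν-trivial and for ν-almost every y ∈ Y the fiber S^y is μ-trivial, then S is (μ × ν)-trivial, i.e. (μ × ν)(S) = 0 or (μ × ν)((X × Y) \ S) = 0. -/
open MeasureTheory Filter

/-- Sufficiency direction of the cross fibering principle: for σ-finite measures
`μ` on `X` and `ν` on `Y` and a `μ × ν`-measurable set `S ⊆ X × Y`, if `μ`-a.e.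
fiber `S_x` is `ν`-trivial and `ν`-a.e. fiber `S^y` is `μ`-trivial, then `S` is
`μ × ν`-trivial, i.e. `(μ × ν)(S) = 0` or `(μ × ν)((X × Y) \ S) = 0`. -/
theorem cross_fibering_sufficiency {X Y : Type*} [MeasurableSpace X] [MeasurableSpace Y]
    (μ : Measure X) (ν : Measure Y) [SigmaFinite μ] [SigmaFinite ν]
    (S : Set (X × Y)) (hS : NullMeasurableSet S (μ.prod ν))
    (hX : ∀ᵐ x ∂μ, ν {y | (x, y) ∈ S} = 0 ∨ ν {y | (x, y) ∈ S}ᶜ = 0)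
    (hY : ∀ᵐ y ∂ν, μ {x | (x, y) ∈ S} = 0 ∨ μ {x | (x, y) ∈ S}ᶜ = 0) :
    (μ.prod ν) S = 0 ∨ (μ.prod ν) Sᶜ = 0 := by
  classical
  obtain ⟨T, hT, hST⟩ := hS
  have hiff : ∀ᵐ z ∂(μ.prod ν), (z ∈ S ↔ z ∈ T) := hST.mem_iff
  have h1 : ∀ᵐ x ∂μ, ∀ᵐ y ∂ν, ((x, y) ∈ S ↔ (x, y) ∈ T) :=
    Measure.ae_ae_of_ae_prod hiff
  have h2 : ∀ᵐ y ∂ν, ∀ᵐ x ∂μ, ((x, y) ∈ S ↔ (x, y) ∈ T) := by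
    have h3 : ∀ᵐ z ∂(ν.prod μ), (z.swap ∈ S ↔ z.swap ∈ T) :=
      (Measure.measurePreserving_swap (μ := ν) (ν := μ)).quasiMeasurePreserving.ae hiff
    exact Measure.ae_ae_of_ae_prod h3
  have hX' : ∀ᵐ x ∂μ, (∀ᵐ y ∂ν, (x, y) ∉ T) ∨ (∀ᵐ y ∂ν, (x, y) ∈ T) := by
    filter_upwards [hX, h1] with x hx hx1
    rcases hx with hx | hx
    · left
      have : ∀ᵐ y ∂ν, (x, y) ∉ S := measure_eq_zero_iff_ae_notMem.1 hx
      filter_upwards [this, hx1] with y a b using fun c => a (b.2 c)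
    · right
      have : ∀ᵐ y ∂ν, (x, y) ∈ S := hx
      filter_upwards [this, hx1] with y a b using b.1 a
  have hY' : ∀ᵐ y ∂ν, (∀ᵐ x ∂μ, (x, y) ∉ T) ∨ (∀ᵐ x ∂μ, (x, y) ∈ T) := by
    filter_upwards [hY, h2] with y hy hy1
    rcases hy with hy | hy
    · left
      have : ∀ᵐ x ∂μ, (x, y) ∉ S := measure_eq_zero_iff_ae_notMem.1 hy
      filter_upwards [this, hy1] with x a b using fun c => a (b.2 c)
    · right
      have : ∀ᵐ x ∂μ, (x, y) ∈ S := hy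
      filter_upwards [this, hy1] with x a b using b.1 a
  by_cases h0 : ∀ᵐ x ∂μ, ∀ᵐ y ∂ν, (x, y) ∉ T
  · left
    have h : ∀ᵐ z ∂(μ.prod ν), z ∉ T :=
      (Measure.ae_prod_iff_ae_ae (p := fun z => z ∉ T) hT.compl).2 h0
    rw [measure_eq_zero_iff_ae_notMem]
    filter_upwards [h, hiff] with z a b using fun c => a (b.1 c)
  · right
    -- the set of `y` with non-null fiber
    let B : Set Y := {y | μ ((fun x => (x, y)) ⁻¹' T) = 0}ᶜ
    have hB : MeasurableSet B :=
      ((measurable_measure_prodMk_right hT) (measurableSet_singleton 0)).compl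
    have hm : MeasurableSet {z : X × Y | z ∈ T → z.2 ∈ B} := by
      have : {z : X × Y | z ∈ T → z.2 ∈ B} = Tᶜ ∪ Prod.snd ⁻¹' B := by
        ext z; simp [imp_iff_not_or]
      rw [this]
      exact hT.compl.union (measurable_snd hB)
    have hTB : ∀ᵐ x ∂μ, ∀ᵐ y ∂ν, ((x, y) ∈ T → y ∈ B) := by
      refine (Measure.ae_ae_comm (p := fun x y => (x, y) ∈ T → y ∈ B) hm).2 ?_
      refine Eventually.of_forall fun y => ?_
      by_cases hy : y ∈ B
      · exact Eventually.of_forall fun x _ => hy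
      · have hy0 : μ ((fun x => (x, y)) ⁻¹' T) = 0 := not_not.1 hy
        have := measure_eq_zero_iff_ae_notMem.1 hy0
        filter_upwards [this] with x a b using absurd b a
    have hBae : ∀ᵐ y ∂ν, y ∈ B := by
      by_contra hcon
      apply h0
      filter_upwards [hX', hTB] with x a b
      rcases a with a | a
      · exact a
      · exact absurd (by filter_upwards [a, b] with y c d using d c) hcon
    have hfin : ∀ᵐ y ∂ν, ∀ᵐ x ∂μ, (x, y) ∈ T := by
      filter_upwards [hBae, hY'] with y a b
      rcases b with b | b
      · exact absurd (measure_eq_zero_iff_ae_notMem.2 b) a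
      · exact b
    have hfin' : ∀ᵐ x ∂μ, ∀ᵐ y ∂ν, (x, y) ∈ T :=
      (Measure.ae_ae_comm (p := fun x y => (x, y) ∈ T) hT).2 hfin
    have h : ∀ᵐ z ∂(μ.prod ν), z ∈ T :=
      (Measure.ae_prod_iff_ae_ae (p := fun z => z ∈ T) hT).2 hfin'
    have h' : ∀ᵐ z ∂(μ.prod ν), z ∈ S := by
      filter_upwards [h, hiff] with z a b using b.2 a
    exact h'
end

section
/- Let m, n ≥ 1 and let Ψ : ℤ^m → [0,∞) be a non-negative function. Then the mn-dimensional Lebesgue measure of the linear forms multiplicative set S^×_{m,n}(Ψ) is either 0 or 1. -/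
open MeasureTheory Filter

/-- The multiplicative linear forms set `S^×_{m,n}(Ψ)`: the set of
`X ∈ [0,1]^{mn}`, viewed as an `m × n` real matrix, such that
`∏ᵢ |(qX)ᵢ + pᵢ| < Ψ(q)` for infinitely many pairs
`(p, q) ∈ ℤ^n × (ℤ^m \ {0})`. -/
def SmulLF (m n : ℕ) (Ψ : (Fin m → ℤ) → ℝ) : Set (Fin m → Fin n → ℝ) :=
  {X | (∀ j i, X j i ∈ Set.Icc (0 : ℝ) 1) ∧
    {pq : (Fin n → ℤ) × (Fin m → ℤ) | pq.2 ≠ 0 ∧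
      ∏ i, |(∑ j, (pq.2 j : ℝ) * X j i) + (pq.1 i : ℝ)| < Ψ pq.2}.Infinite}

open scoped Pointwise

lemma aux_t (b ψ c : ℝ) (hb : 0 ≤ b) (hc : 0 < c) : ∃ t : ℝ, 0 ≤ t ∧ t ≤ 1 ∧
    ∀ u : ℝ, 0 ≤ u → u ≤ 1/2 → (u * b < ψ → u < t) ∧ (u < c * t → u * b < c * ψ) := by
  rcases le_or_gt ψ 0 with h | h
  · refine ⟨0, le_rfl, zero_le_one, fun u hu _ => ⟨fun h1 => ?_, fun h1 => ?_⟩⟩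
    · have := mul_nonneg hu hb
      linarith
    · linarith
  · rcases hb.eq_or_lt with h0 | h0
    · refine ⟨1, zero_le_one, le_rfl, fun u hu hu2 => ⟨fun _ => by linarith, fun _ => ?_⟩⟩
      rw [← h0, mul_zero]; positivity
    · refine ⟨min 1 (ψ / b), by positivity, min_le_left _ _, fun u hu hu2 => ⟨fun h1 => ?_, fun h1 => ?_⟩⟩
      · exact lt_min (by linarith) ((lt_div_iff₀ h0).2 h1)
      · have h2 : u < c * (ψ / b) := h1.trans_le (by gcongr; exact min_le_right _ _)
        rw [← mul_div_assoc] at h2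
        exact (lt_div_iff₀ h0).1 h2

lemma one_dim_s7 {Q : Type*} [Countable Q] [Infinite Q] (P : Q → Prop) (s : Q → Set ℝ) (r : Q → ℝ)
    (hr : Tendsto r cofinite (nhds 0)) (c : ℝ) (hc : 0 < c) :
    ∀ᵐ x : ℝ, {q | P q ∧ x ∈ Metric.thickening (r q) (s q)}.Infinite →
      {q | P q ∧ x ∈ Metric.thickening (c * r q) (s q)}.Infinite := by
  obtain ⟨e⟩ := nonempty_equiv_of_countable (α := ℕ) (β := Q)
  have hr' : Tendsto (fun i => r (e i)) atTop (nhds 0) := by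
    rw [← Nat.cofinite_eq_atTop]
    exact hr.comp e.injective.tendsto_cofinite
  have h := blimsup_thickening_mul_ae_eq (volume : Measure ℝ) (fun i => P (e i)) (fun i => s (e i)) hc
    (fun i => r (e i)) hr'
  have key : ∀ (T : Q → Set ℝ) (x : ℝ), x ∈ blimsup (fun i => T (e i)) atTop (fun i => P (e i)) ↔
      {q | P q ∧ x ∈ T q}.Infinite := by
    intro T x
    rw [← Nat.cofinite_eq_atTop, cofinite.blimsup_set_eq, Set.mem_ofPred_eq]
    rw [← Set.infinite_image_iff (e.injective.injOn) ]
    have : e '' {n | P (e n) ∧ x ∈ T (e n)} = {q | P q ∧ x ∈ T q} := by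
      ext q
      constructor
      · rintro ⟨n, hn, rfl⟩; exact hn
      · intro hq; exact ⟨e.symm q, by simpa using hq, by simp⟩
    rw [← this]
  filter_upwards [h] with x hx
  rw [← key (fun q => Metric.thickening (r q) (s q)), ← key (fun q => Metric.thickening (c * r q) (s q))]
  intro h1
  exact (iff_of_eq hx).2 h1

abbrev Mat (m n : ℕ) := Fin m → Fin n → ℝ

lemma zero_one (m n : ℕ) (A : Set (Mat m n)) (hA : MeasurableSet A)
    (h2 : ∀ X ∈ A, (2 : ℝ) • X ∈ A)
    (hp : ∀ X ∈ A, ∀ Z : Fin m → Fin n → ℤ, (fun j i => X j i + (Z j i : ℝ)) ∈ A)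
    (h0 : volume A ≠ 0) : volume (Aᶜ ∩ Set.Icc 0 1) = 0 := by
  have hd := Besicovitch.ae_tendsto_measure_inter_div_of_measurableSet (volume : Measure (Mat m n)) hA.compl
  obtain ⟨X, hXA, hX⟩ : ∃ X ∈ A, Tendsto (fun r => volume (Aᶜ ∩ Metric.closedBall X r) /
      volume (Metric.closedBall X r)) (nhdsWithin 0 (Set.Ioi 0)) (nhds (Aᶜ.indicator 1 X)) := by
    by_contra! hcon
    apply h0
    rw [measure_eq_zero_iff_ae_notMem]
    filter_upwards [hd] with X hX hXA
    exact hcon X hXA hX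
  rw [Set.indicator_of_notMem (by simpa using hXA)] at hX
  have hk : Tendsto (fun k : ℕ => ((2 : ℝ)⁻¹) ^ k) atTop (nhdsWithin 0 (Set.Ioi 0)) := by
    refine tendsto_nhdsWithin_iff.2 ⟨tendsto_pow_atTop_nhds_zero_of_lt_one (by norm_num) (by norm_num), ?_⟩
    exact Eventually.of_forall fun k => by simp
  have hX' := hX.comp hk
  set V := volume (Metric.closedBall (0 : Mat m n) 1) with hV
  have hVt : V ≠ ⊤ := measure_closedBall_lt_top.ne
  have hV0 : V ≠ 0 := (Metric.measure_closedBall_pos _ _ one_pos).ne'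
  have h2k : ∀ (k : ℕ), ∀ X ∈ A, (2 : ℝ) ^ k • X ∈ A := by
    intro k
    induction k with
    | zero => simp
    | succ k ih =>
      intro X hX
      rw [pow_succ', mul_smul]
      exact h2 _ (ih _ hX)
  have hle : ∀ k : ℕ, volume (Aᶜ ∩ Set.Icc 0 1) / V ≤ volume (Aᶜ ∩ Metric.closedBall X ((2 : ℝ)⁻¹ ^ k)) /
      volume (Metric.closedBall X ((2 : ℝ)⁻¹ ^ k)) := by
    intro k
    let Z : Fin m → Fin n → ℤ := fun j i => ⌈2 ^ k * X j i - 1⌉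
    let W : Mat m n := fun j i => (Z j i : ℝ)
    have h2p : (0 : ℝ) < 2 ^ k := by positivity
    set d := Module.finrank ℝ (Mat m n)
    have e1 : volume (Aᶜ ∩ Set.Icc 0 1) ≤ ENNReal.ofReal ((2 ^ k) ^ d) *
        volume (Aᶜ ∩ Metric.closedBall X ((2 : ℝ)⁻¹ ^ k)) := by
      have : (fun Y => W + Y) '' (Aᶜ ∩ Set.Icc 0 1) ⊆ (2 ^ k : ℝ) • (Aᶜ ∩ Metric.closedBall X ((2 : ℝ)⁻¹ ^ k)) := by
        rintro _ ⟨Y, ⟨hY, hY0, hY1⟩, rfl⟩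
        rw [Set.mem_smul_set_iff_inv_smul_mem₀ h2p.ne']
        constructor
        · intro hmem
          apply hY
          have := h2k k _ hmem
          rw [smul_inv_smul₀ h2p.ne'] at this
          have := hp _ this (-Z)
          convert this using 1
          ext j i
          simp [W]
        · rw [mem_closedBall_iff_norm]
          have : (2 ^ k : ℝ)⁻¹ • (W + Y) - X = (2 ^ k : ℝ)⁻¹ • ((W + Y) - (2 ^ k : ℝ) • X) := by
            rw [smul_sub, inv_smul_smul₀ h2p.ne']
          beta_reduce
          rw [this, norm_smul, norm_inv, norm_pow, Real.norm_ofNat, inv_pow]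
          refine mul_le_of_le_one_right (by positivity) ?_
          refine (pi_norm_le_iff_of_nonneg zero_le_one).2 fun j => (pi_norm_le_iff_of_nonneg zero_le_one).2 fun i => ?_
          have a1 := Int.le_ceil (2 ^ k * X j i - 1)
          have a2 := Int.ceil_lt_add_one (2 ^ k * X j i - 1)
          have a3 := hY0 j i
          have a4 := hY1 j i
          simp only [Pi.zero_apply, Pi.one_apply] at a3 a4
          simp only [Pi.sub_apply, Pi.add_apply, Pi.smul_apply, smul_eq_mul, Real.norm_eq_abs, abs_le, W, Z]
          constructor <;> linarith
      have h3 := measure_mono (μ := volume) this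
      rw [Measure.addHaar_smul, Set.image_add_left, measure_preimage_add] at h3
      rwa [abs_of_pos (by positivity)] at h3
    have e2 : volume (Metric.closedBall X ((2 : ℝ)⁻¹ ^ k)) = ENNReal.ofReal ((2⁻¹ ^ k) ^ d) * V :=
      Measure.addHaar_closedBall' _ _ (by positivity)
    have hD0 : volume (Metric.closedBall X ((2 : ℝ)⁻¹ ^ k)) ≠ 0 :=
      (Metric.measure_closedBall_pos _ _ (by positivity)).ne'
    have hDt : volume (Metric.closedBall X ((2 : ℝ)⁻¹ ^ k)) ≠ ⊤ := measure_closedBall_lt_top.ne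
    rw [ENNReal.div_le_iff hV0 hVt]
    refine e1.trans (le_of_eq ?_)
    have e3 : V = ENNReal.ofReal ((2 ^ k) ^ d) * volume (Metric.closedBall X ((2 : ℝ)⁻¹ ^ k)) := by
      rw [e2, ← mul_assoc, ← ENNReal.ofReal_mul (by positivity), ← mul_pow, ← mul_pow]
      simp
    rw [e3]
    rw [mul_left_comm, ENNReal.div_mul_cancel hD0 hDt]
  have := ge_of_tendsto' hX' hle
  simpa [hVt] using this

/-- limsup set over `q` -/
def AA (m n : ℕ) (Ψ : (Fin m → ℤ) → ℝ) : Set (Mat m n) :=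
  {X | {q : Fin m → ℤ | q ≠ 0 ∧ ∃ p : Fin n → ℤ,
      ∏ i, |(∑ j, (q j : ℝ) * X j i) + (p i : ℝ)| < Ψ q}.Infinite}

lemma measurable_inf {E Q : Type*} [MeasurableSpace E] [Countable Q] (S : Q → Set E)
    (hS : ∀ q, MeasurableSet (S q)) : MeasurableSet {x | {q | x ∈ S q}.Infinite} := by
  have : {x | {q | x ∈ S q}.Infinite} = ⋂ F : Finset Q, ⋃ q : Q, ⋃ _ : q ∉ F, S q := by
    ext x
    simp only [Set.mem_ofPred_eq, Set.mem_iInter, Set.mem_iUnion]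
    constructor
    · intro h F
      obtain ⟨q, hq, hF⟩ := h.exists_notMem_finset F
      exact ⟨q, hF, hq⟩
    · intro h hf
      obtain ⟨q, hF, hq⟩ := h hf.toFinset
      exact hF (by simpa using hq)
  rw [this]
  exact MeasurableSet.iInter fun F => MeasurableSet.iUnion fun q => MeasurableSet.iUnion fun _ => hS q

lemma measurable_piece (m n : ℕ) (Ψ : (Fin m → ℤ) → ℝ) (P : (Fin m → ℤ) → Prop) (q : Fin m → ℤ) :
    MeasurableSet {X : Mat m n | P q ∧ ∃ p : Fin n → ℤ,
      ∏ i, |(∑ j, (q j : ℝ) * X j i) + (p i : ℝ)| < Ψ q} := by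
  refine MeasurableSet.inter (MeasurableSet.const _) ?_
  have : {X : Mat m n | ∃ p : Fin n → ℤ, ∏ i, |(∑ j, (q j : ℝ) * X j i) + (p i : ℝ)| < Ψ q}
     = ⋃ p : Fin n → ℤ, {X : Mat m n | ∏ i, |(∑ j, (q j : ℝ) * X j i) + (p i : ℝ)| < Ψ q} := by
    ext; simp
  change MeasurableSet {X : Mat m n | ∃ p : Fin n → ℤ, ∏ i, |(∑ j, (q j : ℝ) * X j i) + (p i : ℝ)| < Ψ q}
  rw [this]
  refine MeasurableSet.iUnion fun p => (isOpen_lt (by fun_prop) continuous_const).measurableSet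

lemma measurable_AP (m n : ℕ) (Ψ : (Fin m → ℤ) → ℝ) (P : (Fin m → ℤ) → Prop) :
    MeasurableSet {X : Mat m n | {q : Fin m → ℤ | P q ∧ ∃ p : Fin n → ℤ,
      ∏ i, |(∑ j, (q j : ℝ) * X j i) + (p i : ℝ)| < Ψ q}.Infinite} :=
  measurable_inf _ (measurable_piece m n Ψ P)

lemma exists_p_iff {n : ℕ} (y : Fin n → ℝ) (ψ : ℝ) :
    (∃ p : Fin n → ℤ, ∏ i, |y i + (p i : ℝ)| < ψ) ↔ ∏ i, |y i - round (y i)| < ψ := by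
  constructor
  · rintro ⟨p, hp⟩
    refine lt_of_le_of_lt (Finset.prod_le_prod (fun i _ => abs_nonneg _) fun i _ => ?_) hp
    have := round_le (y i) (-p i)
    simpa using this
  · intro h
    exact ⟨fun i => - round (y i), by simpa [sub_eq_add_neg] using h⟩

/-- max at `j` -/
def PP (m : ℕ) (j : Fin m) (q : Fin m → ℤ) : Prop := q ≠ 0 ∧ ∀ k, |q k| ≤ |q j|

lemma PP_ne {m : ℕ} {j : Fin m} {q : Fin m → ℤ} (h : PP m j q) : q j ≠ 0 := by
  intro h0
  apply h.1
  ext k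
  have := h.2 k
  simpa [h0] using this

lemma PP_fin (m : ℕ) (j : Fin m) (K : ℤ) : {q | PP m j q ∧ |q j| ≤ K}.Finite := by
  refine (Set.finite_Icc (fun _ => -K : Fin m → ℤ) (fun _ => K)).subset ?_
  rintro q ⟨h, hK⟩
  exact ⟨fun k => (abs_le.1 ((h.2 k).trans hK)).1, fun k => (abs_le.1 ((h.2 k).trans hK)).2⟩

lemma scale_j (m n : ℕ) (i0 : Fin n) (Ψ : (Fin m → ℤ) → ℝ) (c : ℝ) (hc : 0 < c) (j : Fin m) :
    ∀ᵐ X : Mat m n, {q : Fin m → ℤ | PP m j q ∧ ∃ p : Fin n → ℤ,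
      ∏ i, |(∑ j, (q j : ℝ) * X j i) + (p i : ℝ)| < Ψ q}.Infinite →
      {q : Fin m → ℤ | PP m j q ∧ ∃ p : Fin n → ℤ,
      ∏ i, |(∑ j, (q j : ℝ) * X j i) + (p i : ℝ)| < c * Ψ q}.Infinite := by
  classical
  have : Nonempty (Fin m) := ⟨j⟩
  let v : Mat m n := Pi.single j (Pi.single i0 1)
  let L : ℝ →ₗ[ℝ] Mat m n := LinearMap.toSpanSingleton ℝ _ v
  have hmeas := (measurable_AP m n Ψ (PP m j)).compl.union (measurable_AP m n (fun q => c * Ψ q) (PP m j))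
  suffices h : ∀ X : Mat m n, ∀ᵐ x : ℝ, X + L x ∈ _ by
    have := ae_mem_of_ae_add_linearMap_mem L volume volume hmeas h
    filter_upwards [this] with X hX
    intro h1
    exact hX.resolve_left (fun h2 => h2 h1)
  intro X
  let y : (Fin m → ℤ) → Fin n → ℝ := fun q i => ∑ j, (q j : ℝ) * X j i
  let b : (Fin m → ℤ) → ℝ := fun q => ∏ i ∈ Finset.univ.erase i0, |y q i - round (y q i)|
  have hb : ∀ q, 0 ≤ b q := fun q => Finset.prod_nonneg fun i _ => abs_nonneg _
  choose t ht0 ht1 ht using fun q => aux_t (b q) (Ψ q) c (hb q) hc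
  have hline : ∀ (q : Fin m → ℤ) (x : ℝ) (i : Fin n), ∑ k, (q k : ℝ) * (X + L x) k i =
      y q i + if i = i0 then q j * x else 0 := by
    intro q x i
    simp only [Pi.add_apply, mul_add, Finset.sum_add_distrib, y]
    congr 1
    rw [Finset.sum_eq_single j]
    · by_cases h : i = i0
      · subst h; simp [L, v]
      · simp [L, v, h]
    · intro k _ hk
      simp [L, v, hk]
    · simp
  have hcond : ∀ (q : Fin m → ℤ) (x ψ : ℝ), (∃ p : Fin n → ℤ,
      ∏ i, |(∑ k, (q k : ℝ) * (X + L x) k i) + (p i : ℝ)| < ψ) ↔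
      |(y q i0 + q j * x) - round (y q i0 + q j * x)| * b q < ψ := by
    intro q x ψ
    rw [exists_p_iff (fun i => ∑ k, (q k : ℝ) * (X + L x) k i) ψ]
    simp only [hline]
    rw [← Finset.mul_prod_erase _ _ (Finset.mem_univ i0), if_pos rfl]
    have : ∏ i ∈ Finset.univ.erase i0, |(y q i + if i = i0 then q j * x else 0) -
      round (y q i + if i = i0 then q j * x else 0)| = b q := by
      refine Finset.prod_congr rfl fun i hi => ?_
      rw [if_neg (Finset.ne_of_mem_erase hi), add_zero]
    rw [this]
  let r : (Fin m → ℤ) → ℝ := fun q => if PP m j q then t q / |(q j : ℝ)| else 0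
  let s : (Fin m → ℤ) → Set ℝ := fun q => {x | ∃ z : ℤ, y q i0 + q j * x = z}
  have hr : Tendsto r cofinite (nhds 0) := by
    rw [Metric.tendsto_nhds]
    intro ε hε
    rw [eventually_cofinite]
    refine (PP_fin m j ⌈1 / ε⌉).subset ?_
    intro q hq
    simp only [Set.mem_ofPred_eq, dist_zero_right, not_lt, r] at hq
    by_cases hP : PP m j q
    · refine ⟨hP, ?_⟩
      rw [if_pos hP] at hq
      have h0 : (0 : ℝ) < |(q j : ℝ)| := abs_pos.2 (by exact_mod_cast PP_ne hP)
      rw [Real.norm_of_nonneg (div_nonneg (ht0 q) h0.le), le_div_iff₀ h0] at hq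
      have h3 : |(q j : ℝ)| ≤ 1 / ε := by
        rw [le_div_iff₀ hε]; linarith [ht1 q]
      have h4 := h3.trans (Int.le_ceil _)
      exact_mod_cast h4
    · rw [if_neg hP, norm_zero] at hq
      linarith
  filter_upwards [one_dim_s7 (PP m j) s r hr c hc] with x hx
  by_cases hin : X + L x ∈ {X : Mat m n | {q : Fin m → ℤ | PP m j q ∧ ∃ p : Fin n → ℤ,
      ∏ i, |(∑ j, (q j : ℝ) * X j i) + (p i : ℝ)| < Ψ q}.Infinite}
  swap
  · exact Or.inl hin
  right
  refine (hx ?_).mono ?_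
  · refine Set.Infinite.mono ?_ hin
    rintro q ⟨hP, hq⟩
    refine ⟨hP, ?_⟩
    have hq0 : (q j : ℝ) ≠ 0 := by exact_mod_cast PP_ne hP
    have h0 : (0 : ℝ) < |(q j : ℝ)| := abs_pos.2 hq0
    rw [hcond] at hq
    have h1 := (ht q _ (abs_nonneg _) (abs_sub_round _)).1 hq
    rw [Metric.mem_thickening_iff]
    set w := y q i0 + q j * x with hw
    refine ⟨(round w - y q i0) / q j, ⟨round w, by field_simp; ring⟩, ?_⟩
    simp only [r, if_pos hP]
    rw [lt_div_iff₀ h0, Real.dist_eq, ← abs_mul]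
    have e : (x - (round w - y q i0) / q j) * q j = w - round w := by
      rw [sub_mul, div_mul_cancel₀ _ hq0, hw]; ring
    rw [e]
    exact h1
  · rintro q ⟨hP, hq⟩
    refine ⟨hP, ?_⟩
    have hq0 : (q j : ℝ) ≠ 0 := by exact_mod_cast PP_ne hP
    have h0 : (0 : ℝ) < |(q j : ℝ)| := abs_pos.2 hq0
    rw [hcond]
    refine (ht q _ (abs_nonneg _) (abs_sub_round _)).2 ?_
    rw [Metric.mem_thickening_iff] at hq
    obtain ⟨x', ⟨z, hz⟩, hd⟩ := hq
    refine (round_le _ z).trans_lt ?_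
    simp only [r, if_pos hP] at hd
    rw [← mul_div_assoc, lt_div_iff₀ h0, Real.dist_eq, ← abs_mul] at hd
    have e : (x - x') * q j = y q i0 + q j * x - z := by
      rw [← hz]; ring
    rw [e] at hd
    exact hd

lemma scale (m n : ℕ) (hm : 1 ≤ m) (hn : 1 ≤ n) (Ψ : (Fin m → ℤ) → ℝ) (c : ℝ) (hc : 0 < c) :
    ∀ᵐ X : Mat m n, X ∈ AA m n Ψ → X ∈ AA m n (fun q => c * Ψ q) := by
  have : Nonempty (Fin m) := ⟨⟨0, hm⟩⟩
  filter_upwards [ae_all_iff.2 (scale_j m n ⟨0, hn⟩ Ψ c hc)] with X hX h1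
  by_contra hcon
  have hfin : ∀ j, {q : Fin m → ℤ | PP m j q ∧ ∃ p : Fin n → ℤ,
      ∏ i, |(∑ j, (q j : ℝ) * X j i) + (p i : ℝ)| < Ψ q}.Finite := by
    intro j
    by_contra hj
    exact hcon ((hX j hj).mono fun q hq => ⟨hq.1.1, hq.2⟩)
  apply h1
  refine (Set.finite_iUnion hfin).subset ?_
  rintro q ⟨hq0, hq⟩
  obtain ⟨j, hj⟩ := Finite.exists_max (fun k => |q k|)
  exact Set.mem_iUnion.2 ⟨j, ⟨hq0, hj⟩, hq⟩

lemma AA_double (m n : ℕ) (Ψ : (Fin m → ℤ) → ℝ) (X : Mat m n) (hX : X ∈ AA m n Ψ) :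
    (2 : ℝ) • X ∈ AA m n (fun q => 2 ^ n * Ψ q) := by
  refine Set.Infinite.mono ?_ hX
  rintro q ⟨h0, p, hp⟩
  refine ⟨h0, fun i => 2 * p i, ?_⟩
  have : ∏ i, |(∑ j, (q j : ℝ) * ((2 : ℝ) • X) j i) + ((2 * p i : ℤ) : ℝ)| =
      2 ^ n * ∏ i, |(∑ j, (q j : ℝ) * X j i) + (p i : ℝ)| := by
    have h2 : (2 : ℝ) ^ n = ∏ _i : Fin n, 2 := by simp
    rw [h2, ← Finset.prod_mul_distrib]
    refine Finset.prod_congr rfl fun i _ => ?_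
    rw [← abs_of_pos (two_pos (α := ℝ)), ← abs_mul, abs_of_pos (two_pos (α := ℝ)), mul_add, Finset.mul_sum]
    push_cast
    congr 2
    refine Finset.sum_congr rfl fun j _ => ?_
    simp only [Pi.smul_apply, smul_eq_mul]; ring
  rw [this]
  exact mul_lt_mul_of_pos_left hp (by positivity)

lemma AA_shift (m n : ℕ) (Ψ : (Fin m → ℤ) → ℝ) (X : Mat m n) (hX : X ∈ AA m n Ψ)
    (Z : Fin m → Fin n → ℤ) : (fun j i => X j i + (Z j i : ℝ)) ∈ AA m n Ψ := by
  refine Set.Infinite.mono ?_ hX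
  rintro q ⟨h0, p, hp⟩
  refine ⟨h0, fun i => p i - ∑ j, q j * Z j i, ?_⟩
  refine lt_of_eq_of_lt (Finset.prod_congr rfl fun i _ => ?_) hp
  congr 1
  push_cast
  simp only [mul_add, Finset.sum_add_distrib]
  ring

lemma finite_p {n : ℕ} (y : Fin n → ℝ) (hy : ∀ i (z : ℤ), y i + z ≠ 0) (ψ : ℝ) :
    {p : Fin n → ℤ | ∏ i, |y i + (p i : ℝ)| < ψ}.Finite := by
  let δ : Fin n → ℝ := fun i => |y i - round (y i)|
  have hδ : ∀ i, 0 < δ i := fun i => abs_pos.2 (by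
    have := hy i (- round (y i))
    simpa [sub_eq_add_neg] using this)
  have hδle : ∀ i (z : ℤ), δ i ≤ |y i + z| := fun i z => by
    have := round_le (y i) (-z)
    simpa [δ] using this
  let D : Fin n → ℝ := fun i => ∏ k ∈ Finset.univ.erase i, δ k
  have hD : ∀ i, 0 < D i := fun i => Finset.prod_pos fun k _ => hδ k
  refine (Set.finite_Icc (fun i => ⌊-(y i) - ψ / D i⌋) (fun i => ⌈-(y i) + ψ / D i⌉)).subset ?_
  intro p hp
  have key : ∀ i, |y i + p i| ≤ ψ / D i := by
    intro i
    rw [le_div_iff₀ (hD i)]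
    refine le_trans ?_ (le_of_lt hp)
    rw [← Finset.mul_prod_erase _ _ (Finset.mem_univ i)]
    refine mul_le_mul_of_nonneg_left ?_ (abs_nonneg _)
    exact Finset.prod_le_prod (fun k _ => (hδ k).le) fun k _ => hδle k _
  constructor
  · intro i
    have h1 := (abs_le.1 (key i)).1
    have h2 := Int.floor_le (-(y i) - ψ / D i)
    have : ((⌊-(y i) - ψ / D i⌋ : ℤ) : ℝ) ≤ p i := by linarith
    exact_mod_cast this
  · intro i
    have h1 := (abs_le.1 (key i)).2
    have h2 := Int.le_ceil (-(y i) + ψ / D i)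
    have : (p i : ℝ) ≤ (⌈-(y i) + ψ / D i⌉ : ℤ) := by linarith
    exact_mod_cast this

lemma ae_ne (m n : ℕ) : ∀ᵐ X : Mat m n, ∀ q : Fin m → ℤ, q ≠ 0 → ∀ i (z : ℤ),
    (∑ j, (q j : ℝ) * X j i) + z ≠ 0 := by
  classical
  rw [ae_all_iff]; intro q
  by_cases hq : q = 0
  · simp [hq]
  simp only [ne_eq, hq, not_false_eq_true, forall_const]
  rw [ae_all_iff]; intro i
  rw [ae_all_iff]; intro z
  obtain ⟨j, hj⟩ : ∃ j, q j ≠ 0 := by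
    by_contra! h
    exact hq (funext h)
  have hj' : (q j : ℝ) ≠ 0 := by exact_mod_cast hj
  let v : Mat m n := Pi.single j (Pi.single i 1)
  let L : ℝ →ₗ[ℝ] Mat m n := LinearMap.toSpanSingleton ℝ _ v
  have hs : MeasurableSet {X : Mat m n | (∑ j, (q j : ℝ) * X j i) + z ≠ 0} :=
    (isOpen_ne_fun (by fun_prop) continuous_const).measurableSet
  refine ae_mem_of_ae_add_linearMap_mem L volume volume hs ?_
  intro X
  have hline : ∀ x : ℝ, ∑ k, (q k : ℝ) * (X + L x) k i = (∑ k, (q k : ℝ) * X k i) + q j * x := by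
    intro x
    simp only [Pi.add_apply, mul_add, Finset.sum_add_distrib]
    congr 1
    rw [Finset.sum_eq_single j]
    · simp [L, v]
    · intro k _ hk
      simp [L, v, hk]
    · simp
  have hne := (measure_eq_zero_iff_ae_notMem (μ := (volume : Measure ℝ))).1
    (Real.volume_singleton (a := (-z - ∑ k, (q k : ℝ) * X k i) / q j))
  filter_upwards [hne] with x hx hx0
  rw [hline] at hx0
  apply hx
  rw [Set.mem_singleton_iff, eq_div_iff hj']
  linarith

lemma ae_SmulLF (m n : ℕ) (Ψ : (Fin m → ℤ) → ℝ) :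
    SmulLF m n Ψ =ᵐ[volume] (AA m n Ψ ∩ Set.Icc 0 1 : Set (Mat m n)) := by
  filter_upwards [ae_ne m n] with X hX
  apply propext
  change X ∈ SmulLF m n Ψ ↔ X ∈ AA m n Ψ ∩ Set.Icc 0 1
  have hI : (∀ j i, X j i ∈ Set.Icc (0 : ℝ) 1) ↔ X ∈ Set.Icc 0 1 :=
    ⟨fun h => ⟨fun j i => (h j i).1, fun j i => (h j i).2⟩, fun h j i => ⟨h.1 j i, h.2 j i⟩⟩
  rw [Set.mem_inter_iff, and_comm, ← hI]
  refine and_congr_right fun _ => ?_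
  constructor
  · intro h hfin
    apply h
    have := hfin.biUnion (t := fun q => (fun p => (p, q)) '' {p : Fin n → ℤ | ∏ i, |(∑ j, (q j : ℝ) * X j i) + (p i : ℝ)| < Ψ q})
      (fun q hq => (finite_p _ (hX q hq.1) _).image _)
    refine this.subset ?_
    rintro ⟨p, q⟩ ⟨h0, hp⟩
    exact Set.mem_biUnion (show q ∈ _ from ⟨h0, p, hp⟩) ⟨p, hp, rfl⟩
  · intro h hfin
    apply h
    refine (hfin.image Prod.snd).subset ?_
    rintro q ⟨h0, p, hp⟩
    exact ⟨(p, q), ⟨h0, hp⟩, rfl⟩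

/-- Zero-one law for the multiplicative linear forms set: for any `m, n ≥ 1`
and any non-negative `Ψ : ℤ^m → [0,∞)`, the `mn`-dimensional Lebesgue measure
of `S^×_{m,n}(Ψ)` is either 0 or 1. -/
theorem linear_forms_zero_one_law_S (m n : ℕ) (hm : 1 ≤ m) (hn : 1 ≤ n)
    (Ψ : (Fin m → ℤ) → ℝ) (hΨ : ∀ q, 0 ≤ Ψ q) :
    volume (SmulLF m n Ψ) = 0 ∨ volume (SmulLF m n Ψ) = 1 := by
  rw [measure_congr (ae_SmulLF m n Ψ)]
  let B : Set (Mat m n) := ⋃ k : ℕ, AA m n (fun q => (2 ^ n) ^ k * Ψ q)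
  have hBA : ∀ᵐ X : Mat m n, X ∈ B → X ∈ AA m n Ψ := by
    have : ∀ k : ℕ, ∀ᵐ X : Mat m n, X ∈ AA m n (fun q => (2 ^ n) ^ k * Ψ q) → X ∈ AA m n Ψ := by
      intro k
      have := scale m n hm hn (fun q => (2 ^ n) ^ k * Ψ q) ((2 ^ n) ^ k)⁻¹ (by positivity)
      have e : (fun q => ((2 ^ n : ℝ) ^ k)⁻¹ * ((2 ^ n) ^ k * Ψ q)) = Ψ := by
        funext q
        rw [inv_mul_cancel_left₀ (by positivity)]
      rwa [e] at this
    filter_upwards [ae_all_iff.2 this] with X hX hB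
    obtain ⟨k, hk⟩ := Set.mem_iUnion.1 hB
    exact hX k hk
  by_cases hB : volume B = 0
  · left
    refine measure_mono_null ?_ hB
    intro X hX
    exact Set.mem_iUnion.2 ⟨0, by simpa using hX.1⟩
  · right
    have h := zero_one m n B (MeasurableSet.iUnion fun k => measurable_AP m n _ _) ?_ ?_ hB
    · have hI : volume (Set.Icc (0 : Mat m n) 1) = 1 := by
        have : Set.Icc (0 : Mat m n) 1 = Set.univ.pi fun _ => Set.univ.pi fun _ => Set.Icc (0 : ℝ) 1 := by
          rw [← Set.pi_univ_Icc]
          simp only [← Set.pi_univ_Icc, Pi.zero_apply, Pi.one_apply]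
        rw [this, volume_pi_pi]
        simp only [volume_pi_pi, Real.volume_Icc]
        simp
      rw [← hI]
      refine measure_congr ?_
      filter_upwards [hBA, measure_eq_zero_iff_ae_notMem.1 h] with X h1 h2
      apply propext
      change X ∈ AA m n Ψ ∩ Set.Icc 0 1 ↔ X ∈ Set.Icc 0 1
      refine ⟨fun h => h.2, fun h => ⟨h1 ?_, h⟩⟩
      by_contra h3
      exact h2 ⟨h3, h⟩
    · intro X hX
      obtain ⟨k, hk⟩ := Set.mem_iUnion.1 hX
      refine Set.mem_iUnion.2 ⟨k + 1, ?_⟩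
      have := AA_double m n _ X hk
      simpa only [pow_succ', mul_assoc] using this
    · intro X hX Z
      obtain ⟨k, hk⟩ := Set.mem_iUnion.1 hX
      exact Set.mem_iUnion.2 ⟨k, AA_shift m n _ X hk Z⟩
end

section
/- Let n ≥ 1 and let ψ : ℕ → [0,∞) be a non-negative function. If the n-dimensional Lebesgue measure of D^×_n(ψ) is positive, then it equals 1; similarly, if the n-dimensional Lebesgue measure of S^×_n(ψ) is positive, then it equals 1. -/
open MeasureTheory Filter

/-! ### Gaps between integers coprime to `q` -/

lemma aux_primes (s : Finset ℕ) : (∀ p ∈ s, 2 ≤ p) →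
    (1 : ℝ) / (s.card + 1) ≤ ∏ p ∈ s, (1 - 1 / (p : ℝ)) ∧ (s.card + 1).factorial ≤ ∏ p ∈ s, p := by
  induction s using Finset.induction_on_max with
  | empty => simp
  | insert a s ha ih =>
    intro h
    have has : a ∉ s := fun hm => lt_irrefl _ (ha a hm)
    obtain ⟨h1, h2⟩ := ih (fun p hp => h p (Finset.mem_insert_of_mem hp))
    have hcard : s.card + 2 ≤ a := by
      have hsub : s ⊆ Finset.Ico 2 a := by
        intro p hp
        exact Finset.mem_Ico.2 ⟨h p (Finset.mem_insert_of_mem hp), ha p hp⟩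
      have := Finset.card_le_card hsub
      have h2a := h a (Finset.mem_insert_self _ _)
      simp at this
      omega
    rw [Finset.prod_insert has, Finset.prod_insert has, Finset.card_insert_of_notMem has]
    constructor
    · have hc : ((s.card : ℝ) + 2) ≤ a := by exact_mod_cast hcard
      have hk : (0 : ℝ) ≤ s.card := by positivity
      have : (1 : ℝ) - 1 / (s.card + 2) ≤ 1 - 1 / (a : ℝ) := by
        gcongr
      have h0 : (0 : ℝ) ≤ 1 - 1 / (s.card + 2) := by
        rw [sub_nonneg, div_le_one (by positivity)]; linarith
      calc (1 : ℝ) / ((s.card + 1 : ℕ) + 1)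
          = (1 - 1 / (s.card + 2)) * (1 / (s.card + 1)) := by
            push_cast; field_simp; ring
        _ ≤ _ := mul_le_mul this h1 (by positivity) (h0.trans this)
    · rw [Nat.factorial_succ]
      exact Nat.mul_le_mul (by omega) h2

noncomputable def sieveSet (s : Finset ℕ) (a b : ℝ) : Finset ℤ :=
  {m ∈ Finset.Ico ⌈a⌉ ⌈b⌉ | ∀ p ∈ s, ¬ (p : ℤ) ∣ m}

lemma mem_sieveSet {s : Finset ℕ} {a b : ℝ} {m : ℤ} :
    m ∈ sieveSet s a b ↔ (a ≤ m ∧ (m : ℝ) < b) ∧ ∀ p ∈ s, ¬ (p : ℤ) ∣ m := by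
  simp [sieveSet, Int.ceil_le, Int.lt_ceil]

lemma sieve_insert (s : Finset ℕ) (p : ℕ) (hp : p.Prime) (hs : ∀ r ∈ s, r.Prime) (hps : p ∉ s)
    (a b : ℝ) : (sieveSet (insert p s) a b).card + (sieveSet s (a / p) (b / p)).card
      = (sieveSet s a b).card := by
  classical
  have hp0 : (0 : ℝ) < p := by exact_mod_cast hp.pos
  have hpz : (p : ℤ) ≠ 0 := by exact_mod_cast hp.ne_zero
  rw [← Finset.card_filter_add_card_filter_not (s := sieveSet s a b) (fun m => ¬ (p : ℤ) ∣ m)]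
  congr 1
  · congr 1
    ext m
    simp only [Finset.mem_filter, mem_sieveSet, Finset.mem_insert, forall_eq_or_imp]
    tauto
  · refine Finset.card_bij (fun m _ => (p : ℤ) * m) ?_ ?_ ?_
    · intro m hm
      simp only [Finset.mem_filter, mem_sieveSet, not_not] at hm ⊢
      obtain ⟨⟨h1, h2⟩, h3⟩ := hm
      rw [div_le_iff₀ hp0] at h1
      rw [lt_div_iff₀ hp0] at h2
      push_cast
      refine ⟨⟨⟨by linarith, by linarith⟩, ?_⟩, Dvd.intro _ rfl⟩
      intro r hr hd
      rcases (Nat.prime_iff_prime_int.1 (hs r hr)).dvd_or_dvd hd with h | h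
      · have : r ∣ p := by exact_mod_cast h
        rw [Nat.prime_dvd_prime_iff_eq (hs r hr) hp] at this
        exact hps (this ▸ hr)
      · exact h3 r hr h
    · intro x _ y _ h
      exact mul_left_cancel₀ hpz h
    · intro m hm
      simp only [Finset.mem_filter, mem_sieveSet, not_not] at hm
      obtain ⟨⟨⟨h1, h2⟩, h3⟩, k, rfl⟩ := hm
      refine ⟨k, ?_, rfl⟩
      rw [mem_sieveSet]
      push_cast at h1 h2
      refine ⟨⟨?_, ?_⟩, fun r hr hd => h3 r hr (Dvd.dvd.mul_left hd _)⟩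
      · rw [div_le_iff₀ hp0]; linarith
      · rw [lt_div_iff₀ hp0]; linarith

lemma sieve_bound (s : Finset ℕ) : (∀ p ∈ s, p.Prime) → ∀ a b : ℝ, a ≤ b →
    |((sieveSet s a b).card : ℝ) - (b - a) * ∏ p ∈ s, (1 - 1 / (p : ℝ))| ≤ 2 ^ s.card := by
  classical
  induction s using Finset.induction_on with
  | empty =>
    intro _ a b hab
    have h : ((sieveSet ∅ a b).card : ℤ) = ⌈b⌉ - ⌈a⌉ := by
      simp [sieveSet, Int.ceil_mono hab]
    have h' : ((sieveSet ∅ a b).card : ℝ) = (⌈b⌉ : ℝ) - ⌈a⌉ := by exact_mod_cast h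
    rw [h']
    have := Int.ceil_lt_add_one a
    have := Int.ceil_lt_add_one b
    have := Int.le_ceil a
    have := Int.le_ceil b
    simp only [Finset.prod_empty, Finset.card_empty, pow_zero, mul_one]
    rw [abs_le]
    constructor <;> linarith
  | insert p s hps ih =>
    intro h a b hab
    have hs : ∀ r ∈ s, r.Prime := fun r hr => h r (Finset.mem_insert_of_mem hr)
    have hp := h p (Finset.mem_insert_self _ _)
    have hp0 : (0 : ℝ) < p := by exact_mod_cast hp.pos
    have e := sieve_insert s p hp hs hps a b
    have e' : ((sieveSet (insert p s) a b).card : ℝ) =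
      (sieveSet s a b).card - (sieveSet s (a / p) (b / p)).card := by
      rw [← e]; push_cast; ring
    have i1 := ih hs a b hab
    have i2 := ih hs (a / p) (b / p) (by gcongr)
    rw [Finset.prod_insert hps, Finset.card_insert_of_notMem hps, e', pow_succ]
    have : (b - a) * ((1 - 1 / (p : ℝ)) * ∏ p ∈ s, (1 - 1 / (p : ℝ))) =
      (b - a) * ∏ p ∈ s, (1 - 1 / (p : ℝ)) - (b / p - a / p) * ∏ p ∈ s, (1 - 1 / (p : ℝ)) := by
      ring
    rw [this]
    rw [abs_le] at *
    constructor <;> linarith [i1.1, i1.2, i2.1, i2.2]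

lemma coprime_gap (ε : ℝ) (hε : 0 < ε) : ∃ N : ℕ, ∀ q : ℕ, N ≤ q → ∀ y : ℝ,
    ∃ p : ℤ, Int.gcd p (q : ℤ) = 1 ∧ |y - p| < ε * q := by
  have ht := FloorSemiring.tendsto_pow_div_factorial_atTop (2 : ℝ)
  obtain ⟨K, hK⟩ := eventually_atTop.1 (ht.eventually_lt_const hε)
  obtain ⟨N, hN⟩ := exists_nat_gt ((K + 1) * 2 ^ K / ε)
  refine ⟨N + 1, fun q hq y => ?_⟩
  have hq0 : 0 < q := by omega
  set s := q.primeFactors with hs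
  have hsp : ∀ p ∈ s, p.Prime := fun p hp => Nat.prime_of_mem_primeFactors hp
  obtain ⟨h1, h2⟩ := aux_primes s (fun p hp => (hsp p hp).two_le)
  have hle : ∏ p ∈ s, p ≤ q := Nat.le_of_dvd hq0 (Nat.prod_primeFactors_dvd q)
  have key : ((s.card : ℝ) + 1) * 2 ^ s.card < ε * q := by
    by_cases hc : K ≤ s.card
    · have := hK _ hc
      rw [div_lt_iff₀ (by positivity)] at this
      have h3 : (((s.card + 1).factorial : ℕ) : ℝ) ≤ q := by exact_mod_cast h2.trans hle
      rw [Nat.factorial_succ] at h3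
      push_cast at h3
      calc ((s.card : ℝ) + 1) * 2 ^ s.card < (s.card + 1) * (ε * s.card.factorial) := by gcongr
        _ = ε * ((s.card + 1) * s.card.factorial) := by ring
        _ ≤ _ := by gcongr
    · push Not at hc
      rw [div_lt_iff₀ hε] at hN
      calc ((s.card : ℝ) + 1) * 2 ^ s.card ≤ (K + 1) * 2 ^ K := by
            gcongr
            norm_num
        _ < N * ε := hN
        _ ≤ q * ε := by gcongr; omega
        _ = _ := mul_comm _ _
  have hb := sieve_bound s hsp y (y + ε * q) (by positivity |> fun h => le_add_of_nonneg_right h)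
  have hpos : 0 < (sieveSet s y (y + ε * q)).card := by
    have : (0 : ℝ) < (sieveSet s y (y + ε * q)).card := by
      have h4 : (2 : ℝ) ^ s.card < (ε * q) * ∏ p ∈ s, (1 - 1 / (p : ℝ)) := by
        calc (2 : ℝ) ^ s.card = ((s.card : ℝ) + 1) * 2 ^ s.card * (1 / (s.card + 1)) := by
              field_simp
          _ < (ε * q) * (1 / (s.card + 1)) := by gcongr
          _ ≤ _ := by gcongr
      have := (abs_le.1 hb).1
      rw [add_sub_cancel_left] at this
      linarith
    exact_mod_cast this
  obtain ⟨p, hp⟩ := Finset.card_pos.1 hpos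
  rw [mem_sieveSet] at hp
  obtain ⟨⟨ha, hb'⟩, hd⟩ := hp
  refine ⟨p, ?_, by rw [abs_lt]; constructor <;> linarith⟩
  by_contra hg
  obtain ⟨r, hr, hrd⟩ := Nat.exists_prime_and_dvd hg
  have hrd' : (r : ℤ) ∣ (Int.gcd p q : ℤ) := by exact_mod_cast hrd
  refine hd r ?_ (hrd'.trans (Int.gcd_dvd_left ..))
  have := hrd'.trans (Int.gcd_dvd_right ..)
  exact Nat.mem_primeFactors.2 ⟨hr, by exact_mod_cast this, hq0.ne'⟩

/-! ### The cross fibering principle -/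

def ZeroOne {α : Type*} [MeasurableSpace α] (μ : Measure α) (A : Set α) : Prop :=
  (∀ᵐ x ∂μ, x ∉ A) ∨ (∀ᵐ x ∂μ, x ∈ A)

lemma zeroOne_prod {α β : Type*} [MeasurableSpace α] [MeasurableSpace β] (μ : Measure α)
    (ν : Measure β) [IsProbabilityMeasure μ] [IsProbabilityMeasure ν] (A : Set (α × β))
    (hA : MeasurableSet A) (h1 : ∀ x, ZeroOne ν {y | (x, y) ∈ A})
    (h2 : ∀ y, ZeroOne μ {x | (x, y) ∈ A}) : ZeroOne (μ.prod ν) A := by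
  by_cases hall : ∀ᵐ y ∂ν, ∀ᵐ x ∂μ, (x, y) ∉ A
  · left
    rw [Measure.ae_ae_comm (p := fun y x => (x, y) ∉ A) ((measurable_swap hA).compl)] at hall
    exact (Measure.ae_prod_iff_ae_ae (p := fun z => z ∉ A) hA.compl).2 hall
  · right
    let X : Set α := {x | ∀ᵐ y ∂ν, (x, y) ∈ A}
    have hX : MeasurableSet X := by
      have : X = {x | ν (Prod.mk x ⁻¹' Aᶜ) = 0} := by
        ext x; rfl
      rw [this]
      exact measurable_measure_prodMk_left hA.compl (measurableSet_singleton 0)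
    have hiff : ∀ x, ∀ᵐ y ∂ν, ((x, y) ∈ A ↔ x ∈ X) := by
      intro x
      rcases h1 x with h | h
      · have hx : x ∉ X := by
          intro hx
          obtain ⟨y, hy1, hy2⟩ := (h.and hx).exists
          exact hy1 hy2
        filter_upwards [h] with y hy
        exact iff_of_false hy hx
      · have hx : x ∈ X := h
        filter_upwards [h] with y hy
        exact iff_of_true hy hx
    have hm : MeasurableSet {z : α × β | z ∈ A ↔ z.1 ∈ X} :=
      hA.iff (measurable_fst hX)
    have hiff2 : ∀ᵐ y ∂ν, ∀ᵐ x ∂μ, ((x, y) ∈ A ↔ x ∈ X) :=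
      (Measure.ae_ae_comm (p := fun x y => ((x, y) ∈ A ↔ x ∈ X)) hm).1 (ae_of_all _ hiff)
    have hfr : ∃ᵐ y ∂ν, ∀ᵐ x ∂μ, (x, y) ∈ A := by
      refine Frequently.mono (p := fun y => ¬ ∀ᵐ x ∂μ, (x, y) ∉ A) (not_eventually.1 hall) ?_
      intro y hy
      exact (h2 y).resolve_left hy
    obtain ⟨y, hy1, hy2⟩ := (hfr.and_eventually hiff2).exists
    have hXae : ∀ᵐ x ∂μ, x ∈ X := by
      filter_upwards [hy1, hy2] with x a b
      exact b.1 a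
    exact (Measure.ae_prod_iff_ae_ae (p := fun z => z ∈ A) hA).2 hXae

lemma thr_iff {d c B ψ : ℝ} (hd : 0 ≤ d) (hc : 0 ≤ c) (hB : d ≤ B) :
    d * c < ψ ↔ d < (if c = 0 then (if 0 < ψ then B + 1 else 0) else ψ / c) := by
  split_ifs with h1 h2
  · subst h1
    simp only [mul_zero, h2, true_iff]
    linarith
  · subst h1
    simp only [mul_zero, h2, false_iff]
    linarith
  · rw [lt_div_iff₀ (lt_of_le_of_ne hc (Ne.symm h1))]

lemma measurableSet_infinite_s11 {α : Type*} [MeasurableSpace α] (f : ℕ → α → ℝ)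
    (hf : ∀ q, Measurable (f q)) (ψ : ℕ → ℝ) :
    MeasurableSet {x | {q : ℕ | 0 < q ∧ f q x < ψ q}.Infinite} := by
  have : {x | {q : ℕ | 0 < q ∧ f q x < ψ q}.Infinite} =
      ⋂ N : ℕ, ⋃ q : ℕ, {x | (N < q ∧ 0 < q) ∧ f q x < ψ q} := by
    ext x
    simp only [Set.mem_ofPred_eq, Set.mem_iInter, Set.mem_iUnion]
    rw [Set.infinite_iff_exists_gt]
    refine forall_congr' fun N => exists_congr fun q => ?_
    simp only [Set.mem_ofPred_eq]
    tauto
  rw [this]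
  refine MeasurableSet.iInter fun N => MeasurableSet.iUnion fun q => ?_
  exact (MeasurableSet.const _).inter (measurableSet_lt (hf q) measurable_const)

lemma zeroOne_pi (μ : Measure ℝ) [IsProbabilityMeasure μ] (d : ℕ → ℝ → ℝ) (B : ℕ → ℝ)
    (hm : ∀ q, Measurable (d q)) (h0 : ∀ q t, 0 ≤ d q t) (hB : ∀ q, 0 < q → ∀ t, d q t ≤ B q)
    (h1 : ∀ ψ : ℕ → ℝ, ZeroOne μ {t | {q : ℕ | 0 < q ∧ d q t < ψ q}.Infinite}) (n : ℕ) :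
    ∀ ψ : ℕ → ℝ, ZeroOne (Measure.pi fun _ : Fin n => μ)
      {x | {q : ℕ | 0 < q ∧ ∏ i, d q (x i) < ψ q}.Infinite} := by
  induction n with
  | zero =>
    intro ψ
    by_cases h : {q : ℕ | 0 < q ∧ 1 < ψ q}.Infinite
    · right; exact ae_of_all _ fun x => by simpa using h
    · left; exact ae_of_all _ fun x => by simpa using h
  | succ n ih =>
    intro ψ
    let A : Set (ℝ × (Fin n → ℝ)) :=
      {z | {q : ℕ | 0 < q ∧ d q z.1 * ∏ i, d q (z.2 i) < ψ q}.Infinite}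
    have hA : MeasurableSet A :=
      measurableSet_infinite_s11 (fun q (z : ℝ × (Fin n → ℝ)) => d q z.1 * ∏ i, d q (z.2 i))
        (fun q => ((hm q).comp measurable_fst).mul
          (Finset.measurable_prod _ fun i _ =>
            (hm q).comp ((measurable_pi_apply i).comp measurable_snd))) ψ
    have hZ : ZeroOne (μ.prod (Measure.pi fun _ : Fin n => μ)) A := by
      refine zeroOne_prod _ _ A hA ?_ ?_
      · intro x
        convert ih (fun q => if d q x = 0 then (if 0 < ψ q then (B q) ^ n + 1 else 0)
          else ψ q / d q x) using 3 with y
        refine iff_of_eq (congrArg Set.Infinite (Set.ext fun q => ?_))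
        refine and_congr_right fun hq => ?_
        rw [mul_comm, thr_iff (Finset.prod_nonneg fun i _ => h0 _ _) (h0 _ _)]
        calc ∏ i, d q (y i) ≤ ∏ i : Fin n, B q :=
              Finset.prod_le_prod (fun i _ => h0 _ _) (fun i _ => hB q hq _)
          _ = _ := by simp
      · intro y
        convert h1 (fun q => if ∏ i, d q (y i) = 0 then (if 0 < ψ q then B q + 1 else 0)
          else ψ q / ∏ i, d q (y i)) using 3 with x
        refine iff_of_eq (congrArg Set.Infinite (Set.ext fun q => ?_))
        refine and_congr_right fun hq => ?_
        rw [thr_iff (h0 _ _) (Finset.prod_nonneg fun i _ => h0 _ _) (hB q hq x)]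
    have hmp := measurePreserving_piFinSuccAbove (fun _ : Fin (n + 1) => μ) 0
    have e : ∀ x : Fin (n + 1) → ℝ,
        (MeasurableEquiv.piFinSuccAbove (fun _ : Fin (n + 1) => ℝ) 0) x ∈ A ↔
        x ∈ {x : Fin (n + 1) → ℝ | {q : ℕ | 0 < q ∧ ∏ i, d q (x i) < ψ q}.Infinite} := by
      intro x
      simp only [A, Set.mem_ofPred_eq, Fin.prod_univ_succ]
      rfl
    rcases hZ with h | h
    · left
      filter_upwards [hmp.quasiMeasurePreserving.ae h] with x hx
      exact fun hh => hx ((e x).2 hh)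
    · right
      filter_upwards [hmp.quasiMeasurePreserving.ae h] with x hx
      exact (e x).1 hx

/-! ### One-dimensional zero-one laws -/

lemma dC_lt_iff (q : ℕ) (y θ : ℝ) :
    distNearestCoprime q y < θ ↔ ∃ p : ℤ, Int.gcd p (q : ℤ) = 1 ∧ |y - (p : ℝ)| < θ := by
  unfold distNearestCoprime
  rw [csInf_lt_iff]
  · constructor
    · rintro ⟨_, ⟨p, hp, rfl⟩, h⟩; exact ⟨p, hp, h⟩
    · rintro ⟨p, hp, h⟩; exact ⟨_, ⟨p, hp, rfl⟩, h⟩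
  · refine ⟨0, ?_⟩
    rintro _ ⟨p, _, rfl⟩
    exact abs_nonneg _
  · exact ⟨_, 1, by simp, rfl⟩

lemma dI_lt_iff (y θ : ℝ) : distNearestInt y < θ ↔ ∃ p : ℤ, |y - (p : ℝ)| < θ := by
  unfold distNearestInt
  rw [ciInf_lt_iff]
  refine ⟨0, ?_⟩
  rintro _ ⟨p, rfl⟩
  exact abs_nonneg _

lemma dC_nonneg (q : ℕ) (y : ℝ) : 0 ≤ distNearestCoprime q y := by
  refine Real.sInf_nonneg ?_
  rintro _ ⟨p, _, rfl⟩
  exact abs_nonneg _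

lemma dI_nonneg (y : ℝ) : 0 ≤ distNearestInt y := Real.iInf_nonneg fun _ => abs_nonneg _

lemma dC_le (q : ℕ) (hq : 0 < q) (y : ℝ) : distNearestCoprime q y ≤ q + 1 := by
  refine le_of_lt ((dC_lt_iff q y _).2 ⟨1 + ⌊(y - 1) / q⌋ * q, ?_, ?_⟩)
  · rw [Int.gcd_add_mul_right_left]; simp
  · have hq0 : (0 : ℝ) < q := by exact_mod_cast hq
    have h1 := Int.floor_le ((y - 1) / q)
    have h2 := Int.lt_floor_add_one ((y - 1) / q)
    rw [le_div_iff₀ hq0] at h1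
    rw [div_lt_iff₀ hq0] at h2
    push_cast
    rw [abs_lt]
    constructor <;> linarith

lemma dI_le (y : ℝ) : distNearestInt y ≤ 1 := by
  refine le_of_lt ((dI_lt_iff y _).2 ⟨⌊y⌋, ?_⟩)
  rw [abs_lt]
  constructor <;> linarith [Int.floor_le y, Int.lt_floor_add_one y]

lemma dC_measurable (q : ℕ) : Measurable fun t : ℝ => distNearestCoprime q (q * t) := by
  refine measurable_of_Iio fun θ => ?_
  have : (fun t : ℝ => distNearestCoprime q (q * t)) ⁻¹' Set.Iio θ =
      ⋃ p : ℤ, {t : ℝ | Int.gcd p (q : ℤ) = 1 ∧ |q * t - (p : ℝ)| < θ} := by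
    ext t
    simp [dC_lt_iff]
  rw [this]
  refine MeasurableSet.iUnion fun p => (MeasurableSet.const _).inter ?_
  have hf : Measurable fun t : ℝ => |q * t - (p : ℝ)| := by fun_prop
  exact measurableSet_lt hf measurable_const

lemma dI_measurable (q : ℕ) : Measurable fun t : ℝ => distNearestInt (q * t) := by
  refine measurable_of_Iio fun θ => ?_
  have : (fun t : ℝ => distNearestInt (q * t)) ⁻¹' Set.Iio θ =
      ⋃ p : ℤ, {t : ℝ | |q * t - (p : ℝ)| < θ} := by
    ext t
    simp [dI_lt_iff]
  rw [this]
  refine MeasurableSet.iUnion fun p => ?_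
  exact measurableSet_lt (by fun_prop) measurable_const

def WA (δ : ℕ → ℝ) : Set ℝ :=
  {t | {q : ℕ | 0 < q ∧ ∃ p : ℤ, Int.gcd p (q : ℤ) = 1 ∧ |t - p / q| < δ q}.Infinite}

lemma coe_mem_iff (δ : ℕ → ℝ) (t : ℝ) :
    (t : UnitAddCircle) ∈ addWellApproximable UnitAddCircle δ ↔ t ∈ WA δ := by
  rw [UnitAddCircle.mem_addWellApproximable_iff]
  unfold WA
  refine iff_of_eq (congrArg Set.Infinite (Set.ext fun q => ?_))
  simp only [Set.mem_ofPred_eq]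
  constructor
  · rintro ⟨m, hm, hg, h⟩
    have hq : 0 < q := by omega
    have hq0 : (q : ℝ) ≠ 0 := by exact_mod_cast hq.ne'
    rw [← AddCircle.coe_sub, UnitAddCircle.norm_eq] at h
    refine ⟨hq, m + round (t - m / q) * q, ?_, ?_⟩
    · rw [Int.gcd_add_mul_right_left]
      rw [Int.gcd_natCast_natCast]
      exact hg
    · push_cast
      rw [add_div, mul_div_cancel_right₀ _ hq0, ← sub_sub]
      exact h
  · rintro ⟨hq, p, hg, h⟩
    have hq0 : (q : ℝ) ≠ 0 := by exact_mod_cast hq.ne'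
    have hqz : (q : ℤ) ≠ 0 := by exact_mod_cast hq.ne'
    obtain ⟨m, hm⟩ := Int.eq_ofNat_of_zero_le (Int.emod_nonneg p hqz)
    have hp : p = m + (p / q) * q := by
      rw [← hm, mul_comm]; exact (Int.emod_add_mul_ediv p q).symm
    have hpr : (p : ℝ) = m + ((p / q : ℤ) : ℝ) * q := by exact_mod_cast hp
    refine ⟨m, ?_, ?_, ?_⟩
    · have := Int.emod_lt_of_pos p (by exact_mod_cast hq : (0 : ℤ) < q)
      omega
    · rw [hp, Int.gcd_add_mul_right_left] at hg
      rw [Int.gcd_natCast_natCast] at hg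
      exact hg
    · rw [← AddCircle.coe_sub, UnitAddCircle.norm_eq]
      refine lt_of_le_of_lt (round_le _ (p / q : ℤ)) ?_
      rw [hpr, add_div, mul_div_cancel_right₀ _ hq0, ← sub_sub] at h
      exact h

lemma WA_zeroOne (δ : ℕ → ℝ) (hδ : Tendsto δ atTop (nhds 0)) :
    ZeroOne (volume.restrict (Set.Icc (0 : ℝ) 1)) (WA δ) := by
  have hmp := AddCircle.measurePreserving_mk (T := (1 : ℝ)) 0
  rw [zero_add] at hmp
  rw [← restrict_Ioc_eq_restrict_Icc]
  rcases AddCircle.addWellApproximable_ae_empty_or_univ (T := (1 : ℝ)) δ hδ with h | h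
  · left
    filter_upwards [hmp.quasiMeasurePreserving.ae h] with t ht
    exact fun hh => ht ((coe_mem_iff δ t).2 hh)
  · right
    filter_upwards [hmp.quasiMeasurePreserving.ae h] with t ht
    exact (coe_mem_iff δ t).1 ht

lemma scale_iff {q : ℕ} (hq : 0 < q) (t p θ : ℝ) : |q * t - p| < θ ↔ |t - p / q| < max θ 0 / q := by
  have hq0 : (0 : ℝ) < q := by exact_mod_cast hq
  rw [lt_div_iff₀ hq0, lt_max_iff]
  have : |q * t - p| = |t - p / q| * q := by
    rw [← abs_of_pos hq0, ← abs_mul, abs_of_pos hq0]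
    congr 1
    field_simp
  rw [this]
  have : 0 ≤ |t - p / q| * (q : ℝ) := by positivity
  constructor
  · exact Or.inl
  · rintro (h | h)
    · exact h
    · linarith

lemma not_tendsto_freq (δ : ℕ → ℝ) (h0 : ∀ q, 0 ≤ δ q) (h : ¬ Tendsto δ atTop (nhds 0)) :
    ∃ ε > 0, ∀ N : ℕ, ∃ q ≥ N, ε ≤ δ q := by
  rw [Metric.tendsto_atTop] at h
  push Not at h
  obtain ⟨ε, hε, h⟩ := h
  refine ⟨ε, hε, fun N => ?_⟩
  obtain ⟨q, hq, hh⟩ := h N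
  refine ⟨q, hq, ?_⟩
  rwa [Real.dist_eq, sub_zero, abs_of_nonneg (h0 q)] at hh

lemma dC_zeroOne (θ : ℕ → ℝ) : ZeroOne (volume.restrict (Set.Icc (0 : ℝ) 1))
    {t | {q : ℕ | 0 < q ∧ distNearestCoprime q (q * t) < θ q}.Infinite} := by
  set δ : ℕ → ℝ := fun q => max (θ q) 0 / q with hδdef
  have e : {t : ℝ | {q : ℕ | 0 < q ∧ distNearestCoprime q (q * t) < θ q}.Infinite} = WA δ := by
    unfold WA
    ext t
    refine iff_of_eq (congrArg Set.Infinite (Set.ext fun q => ?_))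
    refine and_congr_right fun hq => ?_
    rw [dC_lt_iff]
    refine exists_congr fun p => and_congr_right fun _ => ?_
    exact scale_iff hq _ _ _
  rw [e]
  by_cases hδ : Tendsto δ atTop (nhds 0)
  · exact WA_zeroOne δ hδ
  · right
    refine ae_of_all _ fun t => ?_
    obtain ⟨ε, hε, h⟩ := not_tendsto_freq δ (fun q => by positivity) hδ
    obtain ⟨M, hM⟩ := coprime_gap ε hε
    unfold WA
    refine Set.infinite_of_forall_exists_gt fun N => ?_
    obtain ⟨q, hq, hh⟩ := h (M + N + 1)
    have hq1 : 0 < q := by omega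
    have hq0 : (0 : ℝ) < q := by exact_mod_cast hq1
    refine ⟨q, ⟨hq1, ?_⟩, by omega⟩
    obtain ⟨p, hp, hpp⟩ := hM q (by omega) (q * t)
    refine ⟨p, hp, ?_⟩
    rw [scale_iff hq1, max_eq_left (by positivity), mul_div_cancel_right₀ _ hq0.ne'] at hpp
    exact hpp.trans_le hh

lemma dI_zeroOne (θ : ℕ → ℝ) : ZeroOne (volume.restrict (Set.Icc (0 : ℝ) 1))
    {t | {q : ℕ | 0 < q ∧ distNearestInt (q * t) < θ q}.Infinite} := by
  set δ : ℕ → ℝ := fun q => max (θ q) 0 / q with hδdef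
  have hδ0 : ∀ q, 0 ≤ δ q := fun q => by positivity
  have e : {t : ℝ | {q : ℕ | 0 < q ∧ distNearestInt (q * t) < θ q}.Infinite} =
      {t : ℝ | {q : ℕ | 0 < q ∧ ∃ p : ℤ, |t - p / q| < δ q}.Infinite} := by
    ext t
    refine iff_of_eq (congrArg Set.Infinite (Set.ext fun q => ?_))
    refine and_congr_right fun hq => ?_
    rw [dI_lt_iff]
    refine exists_congr fun p => ?_
    exact scale_iff hq _ _ _
  rw [e]
  by_cases hδ : Tendsto δ atTop (nhds 0)
  · -- reduced radii
    set η : ℕ → ℝ := fun b => ⨆ k : ℕ, δ (b * (k + 1)) with hη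
    have hbdd : ∀ b, BddAbove (Set.range fun k : ℕ => δ (b * (k + 1))) := by
      intro b
      obtain ⟨C, hC⟩ := hδ.bddAbove_range
      refine ⟨C, ?_⟩
      rintro _ ⟨k, rfl⟩
      exact hC ⟨_, rfl⟩
    have hη0 : Tendsto η atTop (nhds 0) := by
      rw [Metric.tendsto_atTop] at hδ ⊢
      intro ε hε
      obtain ⟨N, hN⟩ := hδ (ε / 2) (by positivity)
      refine ⟨N, fun b hb => ?_⟩
      have h1 : η b ≤ ε / 2 := by
        refine ciSup_le fun k => ?_
        have := hN (b * (k + 1)) (by nlinarith)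
        rw [Real.dist_eq, sub_zero] at this
        exact (le_abs_self _).trans this.le
      have h2 : 0 ≤ η b := Real.iSup_nonneg fun k => hδ0 _
      rw [Real.dist_eq, sub_zero, abs_of_nonneg h2]
      linarith
    have hir : ∀ᵐ t ∂(volume.restrict (Set.Icc (0 : ℝ) 1)), ∀ r : ℚ, t ≠ (r : ℝ) := by
      refine ae_all_iff.2 ?_
      intro r
      exact Measure.ae_ne _ (r : ℝ)
    have key : ∀ᵐ t ∂(volume.restrict (Set.Icc (0 : ℝ) 1)),
        (t ∈ {t : ℝ | {q : ℕ | 0 < q ∧ ∃ p : ℤ, |t - p / q| < δ q}.Infinite} ↔ t ∈ WA η) := by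
      filter_upwards [hir] with t ht
      unfold WA
      simp only [Set.mem_ofPred_eq]
      constructor
      · intro hinf
        refine Set.infinite_of_forall_exists_gt fun N => ?_
        -- a lower bound for the distance to rationals with small denominators
        have hsep : ∃ c > 0, ∀ b : ℕ, 0 < b → b ≤ N → ∀ a : ℤ, c ≤ |t - a / b| := by
          have hdist : ∀ b : ℕ, 0 < b → ∃ c > 0, ∀ a : ℤ, c ≤ |t - a / b| := by
            intro b hb
            have hb0 : (0 : ℝ) < b := by exact_mod_cast hb
            refine ⟨|b * t - round (b * t)| / b, ?_, fun a => ?_⟩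
            · refine div_pos (abs_pos.2 fun h => ?_) hb0
              refine ht ((round (b * t) : ℤ) / (b : ℕ) : ℚ) ?_
              push_cast
              rw [eq_div_iff hb0.ne']
              linarith
            · rw [div_le_iff₀ hb0]
              refine (round_le _ a).trans (le_of_eq ?_)
              rw [← abs_of_pos hb0, ← abs_mul, abs_of_pos hb0]
              congr 1
              field_simp
          clear hinf
          induction N with
          | zero => exact ⟨1, one_pos, fun b h1 h2 => by omega⟩
          | succ N ih =>
            obtain ⟨c, hc, h⟩ := ih
            obtain ⟨c', hc', h'⟩ := hdist (N + 1) (by omega)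
            refine ⟨min c c', lt_min hc hc', fun b h1 h2 a => ?_⟩
            rcases Nat.lt_or_ge N b with h3 | h3
            · obtain rfl : b = N + 1 := by omega
              exact (min_le_right _ _).trans (h' a)
            · exact (min_le_left _ _).trans (h b h1 h3 a)
        obtain ⟨c, hc, hsep⟩ := hsep
        obtain ⟨M, hM⟩ := eventually_atTop.1 (hδ.eventually_lt_const hc)
        obtain ⟨q, ⟨hq, p, hp⟩, hqM⟩ := hinf.exists_gt M
        have hq0 : (q : ℝ) ≠ 0 := by exact_mod_cast hq.ne'
        set g := Int.gcd p q with hg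
        have hgpos : 0 < g := Int.gcd_pos_of_ne_zero_right _ (by exact_mod_cast hq.ne')
        have hg0 : (g : ℝ) ≠ 0 := by exact_mod_cast hgpos.ne'
        obtain ⟨a, ha⟩ : (g : ℤ) ∣ p := Int.gcd_dvd_left ..
        obtain ⟨b, hb⟩ : g ∣ q := by
          have : (g : ℤ) ∣ q := Int.gcd_dvd_right ..
          exact_mod_cast this
        have hbpos : 0 < b := by
          rcases Nat.eq_zero_or_pos b with h | h
          · subst h; omega
          · exact h
        have hb0 : (b : ℝ) ≠ 0 := by exact_mod_cast hbpos.ne'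
        have hcop : Int.gcd a b = 1 := by
          have h1 : Int.gcd p q = g * Int.gcd a b := by
            conv_lhs => rw [ha, hb]
            push_cast
            rw [Int.gcd_mul_left]
            simp
          rw [← hg] at h1
          exact (Nat.eq_of_mul_eq_mul_left hgpos (by rw [mul_one]; exact h1)).symm
        have hfrac : (p : ℝ) / q = a / b := by
          have h1 : (p : ℝ) = g * a := by exact_mod_cast ha
          have h2 : (q : ℝ) = g * b := by exact_mod_cast hb
          rw [h1, h2]
          field_simp
        rw [hfrac] at hp
        refine ⟨b, ⟨hbpos, a, hcop, hp.trans_le ?_⟩, ?_⟩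
        · have := le_ciSup (hbdd b) (g - 1)
          have h3 : b * (g - 1 + 1) = q := by
            rw [Nat.sub_add_cancel hgpos, hb, mul_comm]
          simp only [h3] at this
          exact this
        · by_contra hbN
          have h1 := hsep b hbpos (by omega) a
          have h2 := hM q hqM.le
          linarith
      · intro hinf
        refine Set.infinite_of_forall_exists_gt fun N => ?_
        obtain ⟨b, ⟨hb, p, _, hp⟩, hbN⟩ := hinf.exists_gt N
        obtain ⟨k, hk⟩ := (lt_ciSup_iff (hbdd b)).1 hp
        have hb0 : (b : ℝ) ≠ 0 := by exact_mod_cast hb.ne'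
        refine ⟨b * (k + 1), ⟨by positivity, p * (k + 1), ?_⟩, by nlinarith⟩
        have : ((p * (k + 1) : ℤ) : ℝ) / ((b * (k + 1) : ℕ) : ℝ) = p / b := by
          have : (k : ℝ) + 1 ≠ 0 := by positivity
          push_cast
          field_simp
        rw [this]
        exact hk
    rcases WA_zeroOne η hη0 with h | h
    · left
      filter_upwards [h, key] with t h1 h2
      rwa [h2]
    · right
      filter_upwards [h, key] with t h1 h2
      rwa [h2]
  · right
    refine ae_of_all _ fun t => ?_
    obtain ⟨ε, hε, h⟩ := not_tendsto_freq δ hδ0 hδ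
    refine Set.infinite_of_forall_exists_gt fun N => ?_
    obtain ⟨K, hK⟩ := exists_nat_gt (1 / ε)
    obtain ⟨q, hq, hh⟩ := h (K + N + 1)
    have hq1 : 0 < q := by omega
    have hq0 : (0 : ℝ) < q := by exact_mod_cast hq1
    refine ⟨q, ⟨hq1, ⌊q * t⌋, ?_⟩, by omega⟩
    have h1 : |q * t - ⌊q * t⌋| < 1 := by
      rw [abs_lt]
      constructor <;> linarith [Int.floor_le (q * t), Int.lt_floor_add_one (q * t)]
    rw [scale_iff hq1, max_eq_left zero_le_one] at h1
    refine (h1.trans_le ?_).trans_le hh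
    rw [div_lt_iff₀ hε] at hK
    rw [div_le_iff₀ hq0]
    have : (K : ℝ) ≤ q := by exact_mod_cast (by omega : K ≤ q)
    nlinarith

lemma zeroOne_final (n : ℕ) (A : Set (Fin n → ℝ))
    (h : ZeroOne (Measure.pi fun _ : Fin n => (volume : Measure ℝ).restrict (Set.Icc (0 : ℝ) 1)) A)
    (hpos : 0 < volume ({x | ∀ i, x i ∈ Set.Icc (0 : ℝ) 1} ∩ A)) :
    volume ({x | ∀ i, x i ∈ Set.Icc (0 : ℝ) 1} ∩ A) = 1 := by
  have hQ : {x : Fin n → ℝ | ∀ i, x i ∈ Set.Icc (0 : ℝ) 1} =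
      Set.univ.pi fun _ : Fin n => Set.Icc (0 : ℝ) 1 := by
    ext x; simp only [Set.mem_ofPred_eq, Set.mem_pi, Set.mem_univ, true_implies]
  have hm : MeasurableSet (Set.univ.pi fun _ : Fin n => Set.Icc (0 : ℝ) 1) :=
    MeasurableSet.univ_pi fun _ => measurableSet_Icc
  rw [← Measure.restrict_pi_pi, ← volume_pi] at h
  have e : volume ({x | ∀ i, x i ∈ Set.Icc (0 : ℝ) 1} ∩ A) =
      (volume : Measure (Fin n → ℝ)).restrict (Set.univ.pi fun _ : Fin n => Set.Icc (0 : ℝ) 1) A := by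
    rw [hQ, Measure.restrict_apply' hm, Set.inter_comm]
  rw [e] at hpos ⊢
  rcases h with h | h
  · have : (volume : Measure (Fin n → ℝ)).restrict
        (Set.univ.pi fun _ : Fin n => Set.Icc (0 : ℝ) 1) A = 0 := by
      rw [measure_eq_zero_iff_ae_notMem]; exact h
    exact absurd this hpos.ne'
  · have h' : A =ᵐ[(volume : Measure (Fin n → ℝ)).restrict
        (Set.univ.pi fun _ : Fin n => Set.Icc (0 : ℝ) 1)] Set.univ := eventuallyEq_univ.2 h
    rw [measure_congr h', Measure.restrict_apply_univ, volume_pi_pi]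
    simp

/-- If `|D^×_n(ψ)| > 0` then `|D^×_n(ψ)| = 1`, and if `|S^×_n(ψ)| > 0` then
`|S^×_n(ψ)| = 1`. -/
theorem positive_measure_implies_full (n : ℕ) (hn : 1 ≤ n)
    (ψ : ℕ → ℝ) (hψ : ∀ q, 0 ≤ ψ q) :
    (0 < volume (Dmul n ψ) → volume (Dmul n ψ) = 1) ∧
    (0 < volume (Smul n ψ) → volume (Smul n ψ) = 1) := by
  haveI : IsProbabilityMeasure ((volume : Measure ℝ).restrict (Set.Icc (0 : ℝ) 1)) :=
    ⟨by simp⟩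
  constructor
  · exact zeroOne_final n _ (zeroOne_pi _ (fun q t => distNearestCoprime q (q * t))
      (fun q => q + 1) dC_measurable (fun q t => dC_nonneg _ _) (fun q hq t => dC_le q hq _)
      dC_zeroOne n ψ)
  · exact zeroOne_final n _ (zeroOne_pi _ (fun q t => distNearestInt (q * t))
      (fun q => 1) dI_measurable (fun q t => dI_nonneg _) (fun q hq t => dI_le _)
      dI_zeroOne n ψ)
end
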